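/- arXiv:1407.4371 — 5 statements merged into one kernel-verified Lean document; each statement's English description precedes it below -/
import Mathlib

section
/- Let M be a finitely generated torsion Λ-module. Then there exist nonnegative integers r, μ, λ, an integer ν, and N ∈ ℕ such that for all n ≥ N: the ℤ_p-rank of M/ω_nM equals r, and the torsion subgroup (M/ω_nM)[p^∞] is finite of order p^{μ·p^n + λ·n + ν}. -/
open PowerSeries

/-- `ω_n = (1+T)^{p^n} - 1` in `Λ = ℤ_p[[T]]`. -/
noncomputable def omegaN (p : ℕ) [Fact p.Prime] (n : ℕ) : PowerSeries ℤ_[p] :=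
  (1 + PowerSeries.X) ^ (p ^ n) - 1

/-!
A finitely generated torsion module `M` is annihilated by some `pᵏg` with `p ∤ g`; induct on `k`.

If `k = 0`, then `M` is finitely generated over `ℤ_p` by Weierstrass preparation. Since `ω_n` tends
to `0` in the maximal-adic topology, `ω_n M ⊆ p²M` for large `n`, and as
`ω_{n+1} ∈ ω_n (p + ω_n Λ)`, Nakayama gives `ω_{n+1} M = p ω_n M`. The index `[ω_d M : ω_n M]`
is therefore `[W : pⁿ⁻ᵈ W]` with `W = ω_d M`, whose exponent is eventually linear in `n`: this
yields the `λ`-term.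

For the inductive step, `A = M[p]` contributes the factor `[A : A ∩ ω_n M]`. The submodules
`{x | ω_n x ∈ A}` increase, hence are eventually a constant `C`, so `A ∩ ω_n M = ω_n C`. Modulo `p`
the quotient `ω_n / ω_m` is `X ^ (pⁿ - pᵐ)`, and the index of `X ^ e B` in `B = ω_m C` has an
exponent that is eventually linear in `e`: this yields the `μ`-term.
-/

open Filter IsLocalRing
open scoped Pointwise

section RelIndex

variable {R M : Type*} [CommRing R] [AddCommGroup M] [Module R M]

/-- The index `[X : X ∩ Y]` of submodules as a natural number, with value `0` when infinite. -/
noncomputable abbrev submoduleRelIndex (Y X : Submodule R M) : ℕ :=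
  Y.toAddSubgroup.relIndex X.toAddSubgroup

theorem submoduleRelIndex_mul {Z Y X : Submodule R M} (hZY : Z ≤ Y) (hYX : Y ≤ X) :
    submoduleRelIndex Z Y * submoduleRelIndex Y X = submoduleRelIndex Z X :=
  AddSubgroup.relIndex_mul_relIndex _ _ _ (Submodule.toAddSubgroup_mono hZY)
    (Submodule.toAddSubgroup_mono hYX)

theorem submoduleRelIndex_eq_card_map_mkQ (Y X : Submodule R M) :
    submoduleRelIndex Y X = Nat.card (X.map Y.mkQ) := by
  have hker : Y.mkQ.toAddMonoidHom.ker = Y.toAddSubgroup := by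
    ext x
    simp [AddMonoidHom.mem_ker]
  rw [submoduleRelIndex, ← hker, AddSubgroup.relIndex_ker]
  rfl

theorem submoduleRelIndex_smul_smul_dvd (a : R) {Y X : Submodule R M} (hYX : Y ≤ X) :
    submoduleRelIndex (a • Y) (a • X) ∣ submoduleRelIndex Y X := by
  have hmap : submoduleRelIndex (a • Y) (a • X) = _ :=
    AddSubgroup.relIndex_map_map (DistribSMul.toAddMonoidHom M a) Y.toAddSubgroup X.toAddSubgroup
  set K := (DistribSMul.toAddMonoidHom M a).ker
  have hsup : X.toAddSubgroup ⊔ K = X.toAddSubgroup ⊔ (Y.toAddSubgroup ⊔ K) := by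
    rw [← sup_assoc, sup_eq_left.2 (Submodule.toAddSubgroup_mono hYX)]
  rw [hmap, hsup, AddSubgroup.relIndex_sup_right]
  exact AddSubgroup.relIndex_dvd_of_le_left _ le_sup_left

theorem pow_succ_smul_le_pow_smul (a : R) (A : Submodule R M) (e : ℕ) :
    a ^ (e + 1) • A ≤ a ^ e • A := by
  rw [pow_succ', mul_smul]
  exact Submodule.smul_le_self_of_tower a _

theorem submoduleRelIndex_pow_succ_smul_dvd (a : R) (A : Submodule R M) (e : ℕ) :
    submoduleRelIndex (a ^ (e + 1) • A) (a ^ e • A) ∣ submoduleRelIndex (a • A) A := by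
  rw [pow_succ, mul_smul]
  exact submoduleRelIndex_smul_smul_dvd _ (Submodule.smul_le_self_of_tower a A)

theorem submoduleRelIndex_pow_succ_smul (a : R) (A : Submodule R M) (e : ℕ) :
    submoduleRelIndex (a ^ (e + 1) • A) A =
      submoduleRelIndex (a ^ (e + 1) • A) (a ^ e • A) * submoduleRelIndex (a ^ e • A) A :=
  (submoduleRelIndex_mul (pow_succ_smul_le_pow_smul a A e)
    (Submodule.smul_le_self_of_tower _ A)).symm

theorem submoduleRelIndex_pow_smul_dvd (a : R) (A : Submodule R M) (e : ℕ) :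
    submoduleRelIndex (a ^ e • A) A ∣ submoduleRelIndex (a • A) A ^ e := by
  induction e with
  | zero => simp [submoduleRelIndex]
  | succ e ih =>
    rw [submoduleRelIndex_pow_succ_smul, pow_succ' (submoduleRelIndex (a • A) A)]
    exact mul_dvd_mul (submoduleRelIndex_pow_succ_smul_dvd a A e) ih

-- The successive indices `[aᵉA : aᵉ⁺¹A]` are powers of `p`, each dividing the previous one, so
-- they become constant.
theorem exists_submoduleRelIndex_pow_add_smul_eq {p : ℕ} (hp : p.Prime) (a : R)
    (A : Submodule R M) {j : ℕ} (hj : submoduleRelIndex (a • A) A = p ^ j) :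
    ∃ e₀ μ c : ℕ, ∀ k, submoduleRelIndex (a ^ (e₀ + k) • A) A = p ^ (μ * k + c) := by
  have hstep (e : ℕ) : ∃ b, submoduleRelIndex (a ^ (e + 1) • A) (a ^ e • A) = p ^ b :=
    ((Nat.dvd_prime_pow hp).1 (hj ▸ submoduleRelIndex_pow_succ_smul_dvd a A e)).imp
      fun _ hb => hb.2
  choose b hb using hstep
  have hanti : Antitone b := antitone_nat_of_succ_le fun e => by
    have hdvd := submoduleRelIndex_smul_smul_dvd a (pow_succ_smul_le_pow_smul a A e)
    rw [← mul_smul, ← mul_smul, ← pow_succ', ← pow_succ', hb, hb] at hdvd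
    exact (Nat.pow_dvd_pow_iff_le_right hp.one_lt).1 hdvd
  obtain ⟨e₀, he₀⟩ := WellFoundedGT.monotone_chain_condition (α := ℕᵒᵈ)
    ⟨fun e => OrderDual.toDual (b e), hanti⟩
  have hconst (e : ℕ) (he : e₀ ≤ e) : b e = b e₀ := (he₀ e he).symm
  obtain ⟨c, -, hc⟩ := (Nat.dvd_prime_pow hp).1
    ((submoduleRelIndex_pow_smul_dvd a A e₀).trans (by rw [hj, ← pow_mul]))
  refine ⟨e₀, b e₀, c, fun k => ?_⟩
  induction k with
  | zero => simpa using hc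
  | succ k ih =>
    rw [← add_assoc, submoduleRelIndex_pow_succ_smul, hb, hconst _ (by lia), ih, ← pow_add]
    congr 1
    ring

end RelIndex

section TorsionComparison

variable {A X Y : Type*} [CommRing A] [AddCommGroup X] [Module A X] [AddCommGroup Y] [Module A Y]

theorem comap_torsion_of_isTorsion_ker (f : X →ₗ[A] Y) (hker : Module.IsTorsion A f.ker) :
    (Submodule.torsion A Y).comap f = Submodule.torsion A X := by
  ext x
  simp only [Submodule.mem_comap, Submodule.mem_torsion_iff]
  constructor
  · rintro ⟨a, ha⟩
    have hmem : a • x ∈ f.ker := by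
      rw [LinearMap.mem_ker, Submonoid.smul_def, map_smul]
      exact ha
    obtain ⟨b, hb⟩ := @hker ⟨a • x, hmem⟩
    exact ⟨b * a, by simpa [mul_smul] using congrArg Subtype.val hb⟩
  · rintro ⟨a, ha⟩
    exact ⟨a, by rw [Submonoid.smul_def, ← map_smul, ← Submonoid.smul_def, ha, map_zero]⟩

theorem card_torsion_eq_of_surjective_of_isTorsion_ker (f : X →ₗ[A] Y)
    (hf : Function.Surjective f) (hker : Module.IsTorsion A f.ker) :
    Nat.card (Submodule.torsion A X) = Nat.card f.ker * Nat.card (Submodule.torsion A Y) := by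
  have hcomap := comap_torsion_of_isTorsion_ker f hker
  have hle : f.ker ≤ Submodule.torsion A X := hcomap ▸ Submodule.comap_mono bot_le
  have hmap : (Submodule.torsion A X).map f = Submodule.torsion A Y := by
    rw [← hcomap, Submodule.map_comap_eq_of_surjective hf]
  have hindex : submoduleRelIndex f.ker (Submodule.torsion A X) =
      Nat.card ((Submodule.torsion A X).map f) :=
    AddSubgroup.relIndex_ker (Submodule.torsion A X).toAddSubgroup f.toAddMonoidHom
  have hbot (N : Submodule A X) : submoduleRelIndex ⊥ N = Nat.card N :=
    AddSubgroup.relIndex_bot_left N.toAddSubgroup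
  rw [← hmap, ← hindex, ← hbot, ← hbot, submoduleRelIndex_mul bot_le hle]

theorem card_torsion_eq_of_linearEquiv (e : X ≃ₗ[A] Y) :
    Nat.card (Submodule.torsion A X) = Nat.card (Submodule.torsion A Y) := by
  have hker : e.toLinearMap.ker = ⊥ := e.ker
  have := hker ▸ card_torsion_eq_of_surjective_of_isTorsion_ker e.toLinearMap e.surjective
  simpa using this fun x => ⟨1, Subsingleton.elim _ _⟩

variable {R M : Type*} [CommRing R] [Algebra A R] [AddCommGroup M] [Module R M] [Module A M]
  [IsScalarTower A R M] {U V : Submodule R M}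

theorem card_ker_factor (h : U ≤ V) :
    Nat.card ((Submodule.factor h).restrictScalars A).ker = submoduleRelIndex U V := by
  have hker : (Submodule.factor h).ker = V.map U.mkQ := by
    simp [Submodule.factor, Submodule.mapQ, Submodule.ker_liftQ]
  rw [submoduleRelIndex_eq_card_map_mkQ, ← hker]
  rfl

variable [IsDomain A]

theorem finrank_eq_of_surjective_of_isTorsion_ker (f : X →ₗ[A] Y) (hf : Function.Surjective f)
    (hker : Module.IsTorsion A f.ker) : Module.finrank A X = Module.finrank A Y := by
  have hrank := rank_quotient_add_rank_of_isDomain f.ker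
  rw [Module.rank_eq_zero_iff_isTorsion.2 hker, add_zero] at hrank
  rw [Module.finrank, ← hrank]
  exact (f.quotKerEquivOfSurjective hf).finrank_eq

variable [Infinite A]

variable (A X) in
theorem module_isTorsion_of_finite [Finite X] : Module.IsTorsion A X := by
  intro x
  obtain ⟨a, b, hab, heq⟩ := Finite.exists_ne_map_eq_of_infinite fun a : A => a • x
  exact ⟨⟨a - b, mem_nonZeroDivisors_of_ne_zero (sub_ne_zero.2 hab)⟩,
    by simpa only [Submonoid.mk_smul, sub_smul, sub_eq_zero] using heq⟩

theorem isTorsion_ker_factor (h : U ≤ V) (hindex : submoduleRelIndex U V ≠ 0) :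
    Module.IsTorsion A ((Submodule.factor h).restrictScalars A).ker := by
  have := Nat.finite_of_card_ne_zero ((card_ker_factor (A := A) h).trans_ne hindex)
  exact module_isTorsion_of_finite A _

theorem finrank_quotient_eq_of_submoduleRelIndex_ne_zero (h : U ≤ V)
    (hindex : submoduleRelIndex U V ≠ 0) :
    Module.finrank A (M ⧸ U) = Module.finrank A (M ⧸ V) :=
  finrank_eq_of_surjective_of_isTorsion_ker ((Submodule.factor h).restrictScalars A)
    (Submodule.factor_surjective h) (isTorsion_ker_factor h hindex)

theorem card_torsion_quotient_eq_submoduleRelIndex_mul (h : U ≤ V)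
    (hindex : submoduleRelIndex U V ≠ 0) :
    Nat.card (Submodule.torsion A (M ⧸ U)) =
      submoduleRelIndex U V * Nat.card (Submodule.torsion A (M ⧸ V)) := by
  rw [← card_ker_factor (A := A) h]
  exact card_torsion_eq_of_surjective_of_isTorsion_ker ((Submodule.factor h).restrictScalars A)
    (Submodule.factor_surjective h) (isTorsion_ker_factor h hindex)

end TorsionComparison

section PrimePowerCardinality

variable {A N : Type*} [CommRing A] [IsLocalRing A] [Finite (ResidueField A)] [AddCommGroup N]
  [Module A N] [Module.Finite A N] {p k : ℕ}

theorem finite_of_maximalIdeal_pow_le_annihilator [IsNoetherianRing A]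
    (h : maximalIdeal A ^ k ≤ Module.annihilator A N) : Finite N := by
  have htors : Module.IsTorsionBySet A N (maximalIdeal A ^ k : Ideal A) :=
    (Module.isTorsionBySet_iff_subset_annihilator A N).2 h
  let _ := htors.module
  have := htors.isScalarTower (S := A)
  have : Module.Finite (A ⧸ maximalIdeal A ^ k) N := Module.Finite.of_restrictScalars_finite A _ _
  have : Finite (A ⧸ maximalIdeal A) := ‹Finite (ResidueField A)›
  have := Ideal.finite_quotient_pow (IsNoetherian.noetherian (maximalIdeal A)) k
  exact Module.finite_of_finite (A ⧸ maximalIdeal A ^ k)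

theorem exists_card_eq_prime_pow [IsNoetherianRing A] [Fact p.Prime]
    (hpA : (p : A) ∈ maximalIdeal A) (h : maximalIdeal A ^ k ≤ Module.annihilator A N) :
    ∃ j, Nat.card N = p ^ j := by
  have := finite_of_maximalIdeal_pow_le_annihilator h
  have hgroup : IsPGroup p (Multiplicative N) := fun x => by
    refine ⟨k, Multiplicative.toAdd.injective ?_⟩
    rw [toAdd_pow, toAdd_one, ← Nat.cast_smul_eq_nsmul A, Nat.cast_pow]
    exact Module.mem_annihilator.1 (h (Ideal.pow_mem_pow hpA k)) _
  exact (IsPGroup.iff_card (G := Multiplicative N)).1 hgroup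

theorem exists_card_torsion_eq_prime_pow [IsDomain A] [IsPrincipalIdealRing A] [Fact p.Prime]
    (hpA : (p : A) ∈ maximalIdeal A) : ∃ j, Nat.card (Submodule.torsion A N) = p ^ j := by
  have hann : Module.annihilator A (Submodule.torsion A N) ≠ ⊥ := by
    obtain ⟨a, ha, ha₀⟩ := Submodule.annihilator_top_inter_nonZeroDivisors
      (Submodule.torsion_isTorsion (R := A) (M := N))
    rw [Submodule.annihilator_top] at ha
    exact (Submodule.ne_bot_iff _).2 ⟨a, ha, nonZeroDivisors.ne_zero ha₀⟩
  obtain ⟨k, hk⟩ := exists_maximalIdeal_pow_eq_of_principal A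
    (IsPrincipalIdealRing.principal _) _ hann
  exact exists_card_eq_prime_pow hpA hk.ge

theorem exists_submoduleRelIndex_eq_prime_pow [Fact p.Prime] {R M : Type*} [CommRing R]
    [Algebra ℤ_[p] R] [AddCommGroup M] [Module R M] [Module ℤ_[p] M] [IsScalarTower ℤ_[p] R M]
    {U V : Submodule R M} [Module.Finite ℤ_[p] (V.map U.mkQ)]
    (h : (p : R) • V ≤ U) : ∃ j, submoduleRelIndex U V = p ^ j := by
  rw [submoduleRelIndex_eq_card_map_mkQ]
  refine exists_card_eq_prime_pow (A := ℤ_[p]) (k := 1)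
    (by simp [PadicInt.maximalIdeal_eq_span_p]) ?_
  rw [pow_one, PadicInt.maximalIdeal_eq_span_p, Ideal.span_singleton_le_iff_mem,
    Module.mem_annihilator]
  rintro ⟨-, x, hx, rfl⟩
  have hmem : (p : R) • x ∈ U := h (Submodule.smul_mem_pointwise_smul _ _ _ hx)
  have hzero := (Submodule.Quotient.mk_eq_zero U).2 hmem
  simpa [Subtype.ext_iff, Nat.cast_smul_eq_nsmul] using hzero

end PrimePowerCardinality

section Weierstrass

variable {A M : Type*} [CommRing A] [IsLocalRing A] [AddCommGroup M] [Module A⟦X⟧ M] [Module A M]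
  [IsScalarTower A A⟦X⟧ M]

theorem finite_quotient_span_of_map_residue_ne_zero [IsAdicComplete (maximalIdeal A) A] {g : A⟦X⟧}
    (hg : g.map (residue A) ≠ 0) : Module.Finite A (A⟦X⟧ ⧸ Ideal.span {g}) := by
  obtain ⟨f, h, H⟩ := exists_isWeierstrassFactorization hg
  have := H.isDistinguishedAt.monic.finite_quotient
  exact Module.Finite.equiv H.algEquivQuotient.toLinearEquiv

theorem finite_of_mem_annihilator_of_map_residue_ne_zero [IsAdicComplete (maximalIdeal A) A]
    [Module.Finite A⟦X⟧ M] {g : A⟦X⟧} (hg : g.map (residue A) ≠ 0)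
    (hgM : g ∈ Module.annihilator A⟦X⟧ M) : Module.Finite A M := by
  have htors : Module.IsTorsionBySet A⟦X⟧ M (Ideal.span {g} : Ideal A⟦X⟧) :=
    (Module.isTorsionBySet_span_singleton_iff g).2 fun x => Module.mem_annihilator.1 hgM x
  let _ := htors.module
  have := htors.isScalarTower (S := A)
  have := htors.isScalarTower (S := A⟦X⟧)
  have := finite_quotient_span_of_map_residue_ne_zero hg
  have : Module.Finite (A⟦X⟧ ⧸ Ideal.span {g}) M := Module.Finite.of_restrictScalars_finite A⟦X⟧ _ _
  exact Module.Finite.trans (A⟦X⟧ ⧸ Ideal.span {g}) M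

theorem map_residue_ne_zero_of_not_C_dvd {ϖ : A} (hϖ : maximalIdeal A = Ideal.span {ϖ})
    {g : A⟦X⟧} (hg : ¬ C ϖ ∣ g) : g.map (residue A) ≠ 0 := by
  contrapose! hg
  have hcoeff (i : ℕ) : ϖ ∣ coeff i g := by
    rw [← Ideal.mem_span_singleton, ← hϖ, ← residue_eq_zero_iff, ← coeff_map, hg, map_zero]
  choose c hc using hcoeff
  exact ⟨PowerSeries.mk c, by ext i; rw [coeff_C_mul, coeff_mk, hc]⟩

end Weierstrass

section IwasawaAlgebra

variable {p : ℕ} [Fact p.Prime] {M : Type*} [AddCommGroup M] [Module ℤ_[p]⟦X⟧ M]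
  [Module.Finite ℤ_[p]⟦X⟧ M]

theorem natCast_mem_maximalIdeal_powerSeries : (p : ℤ_[p]⟦X⟧) ∈ maximalIdeal ℤ_[p]⟦X⟧ := by
  rw [mem_maximalIdeal, mem_nonunits_iff, isUnit_iff_constantCoeff, map_natCast]
  exact PadicInt.p_nonunit

theorem not_natCast_dvd_X : ¬ (p : ℤ_[p]⟦X⟧) ∣ X := by
  rintro ⟨g, hg⟩
  have hcoeff := congrArg (coeff 1) hg
  rw [coeff_one_X, ← map_natCast (C (R := ℤ_[p])), coeff_C_mul] at hcoeff
  exact PadicInt.p_nonunit (IsUnit.of_mul_eq_one _ hcoeff.symm)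

theorem exists_pow_mul_mem_annihilator (htors : Module.IsTorsion ℤ_[p]⟦X⟧ M) :
    ∃ (k : ℕ) (g : ℤ_[p]⟦X⟧), ¬ (p : ℤ_[p]⟦X⟧) ∣ g ∧
      (p : ℤ_[p]⟦X⟧) ^ k * g ∈ Module.annihilator ℤ_[p]⟦X⟧ M := by
  obtain ⟨f, hf, hf₀⟩ := Submodule.annihilator_top_inter_nonZeroDivisors htors
  obtain ⟨g, hfg, hg⟩ := (FiniteMultiplicity.of_not_isUnit
    ((mem_maximalIdeal _).1 natCast_mem_maximalIdeal_powerSeries)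
    (nonZeroDivisors.ne_zero hf₀)).exists_eq_pow_mul_and_not_dvd
  exact ⟨_, g, hg, hfg ▸ Submodule.annihilator_top (R := ℤ_[p]⟦X⟧) (M := M) ▸ hf⟩

theorem finite_padicInt_of_mem_annihilator [Module ℤ_[p] M]
    [IsScalarTower ℤ_[p] ℤ_[p]⟦X⟧ M] {g : ℤ_[p]⟦X⟧} (hg : ¬ (p : ℤ_[p]⟦X⟧) ∣ g)
    (hgM : g ∈ Module.annihilator ℤ_[p]⟦X⟧ M) : Module.Finite ℤ_[p] M := by
  rw [← map_natCast (C (R := ℤ_[p]))] at hg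
  exact finite_of_mem_annihilator_of_map_residue_ne_zero
    (map_residue_ne_zero_of_not_C_dvd PadicInt.maximalIdeal_eq_span_p hg) hgM

end IwasawaAlgebra

section OmegaN

variable {p : ℕ} [Fact p.Prime]

theorem omegaN_add (m k : ℕ) : omegaN p (m + k) = (1 + omegaN p m) ^ p ^ k - 1 := by
  simp only [omegaN, add_sub_cancel, pow_add, pow_mul]

theorem omegaN_dvd_omegaN {m n : ℕ} (h : m ≤ n) : omegaN p m ∣ omegaN p n := by
  obtain ⟨k, rfl⟩ := Nat.exists_eq_add_of_le h
  simpa [omegaN_add] using sub_one_dvd_pow_sub_one (1 + omegaN p m) (p ^ k)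

theorem exists_omegaN_succ_eq (n : ℕ) :
    ∃ h, omegaN p (n + 1) = (p + omegaN p n * h) * omegaN p n := by
  obtain ⟨h, hh⟩ := Polynomial.powAddExpansion 1 (omegaN p n) p
  refine ⟨h, ?_⟩
  rw [omegaN_add, pow_one, hh, one_pow, one_pow]
  ring

theorem omegaN_mem_maximalIdeal_pow (n : ℕ) : omegaN p n ∈ maximalIdeal ℤ_[p]⟦X⟧ ^ (n + 1) := by
  induction n with
  | zero => simp [omegaN, isUnit_iff_constantCoeff]
  | succ n ih =>
    obtain ⟨h, hh⟩ := exists_omegaN_succ_eq (p := p) n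
    rw [hh, pow_succ' _ (n + 1)]
    exact Ideal.mul_mem_mul (add_mem natCast_mem_maximalIdeal_powerSeries
      (Ideal.mul_mem_right _ _ (Ideal.pow_le_self n.succ_ne_zero ih))) ih

theorem natCast_dvd_omegaN_sub_X_pow (n : ℕ) :
    (p : ℤ_[p]⟦X⟧) ∣ omegaN p n - X ^ p ^ n := by
  obtain ⟨r, hr⟩ := exists_add_pow_prime_pow_eq (Fact.out : p.Prime) (1 : ℤ_[p]⟦X⟧) X n
  rw [omegaN, hr, one_pow]
  exact ⟨X * r, by ring⟩

theorem exists_omegaN_add_eq_mul (m k : ℕ) :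
    ∃ v, omegaN p (m + k) = v * omegaN p m ∧
      (p : ℤ_[p]⟦X⟧) ∣ v - X ^ (p ^ (m + k) - p ^ m) := by
  obtain ⟨r, hr⟩ := exists_add_pow_prime_pow_eq (Fact.out : p.Prime) 1 (omegaN p m) k
  refine ⟨omegaN p m ^ (p ^ k - 1) + p * r, ?_, ?_⟩
  · rw [omegaN_add, hr, one_pow, ← pow_sub_one_mul (NeZero.ne (p ^ k)) (omegaN p m)]
    ring
  · have hexp : p ^ (m + k) - p ^ m = p ^ m * (p ^ k - 1) := by
      rw [Nat.mul_sub_one, ← pow_add]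
    rw [hexp, pow_mul, add_sub_right_comm]
    exact dvd_add ((natCast_dvd_omegaN_sub_X_pow m).trans (sub_dvd_pow_sub_pow _ _ _))
      (dvd_mul_right _ _)

end OmegaN

section PointwiseSMul

variable {R M : Type*} [CommRing R] [AddCommGroup M] [Module R M]

theorem smul_submodule_eq_of_dvd_sub {a u v : R} {A : Submodule R M} (hA : a • A = ⊥)
    (h : a ∣ u - v) : u • A = v • A := by
  have hsmul (x : M) (hx : x ∈ A) : u • x = v • x := by
    obtain ⟨b, hb⟩ := h
    have hax : a • x ∈ a • A := Submodule.smul_mem_pointwise_smul _ _ _ hx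
    rw [hA, Submodule.mem_bot] at hax
    rw [← sub_eq_zero, ← sub_smul, hb, mul_comm, mul_smul, hax, smul_zero]
  ext y
  simp only [Submodule.mem_smul_pointwise_iff_exists]
  exact exists_congr fun x => and_congr_right fun hx => by rw [hsmul x hx]

-- Nakayama: `aN = (a + t)N + tN ⊆ (a + t)N + a(aN)`.
theorem add_smul_eq_smul_of_smul_le [IsLocalRing R] {N : Submodule R M} (hN : N.FG) {a t : R}
    (ha : a ∈ maximalIdeal R) (ht : t • N ≤ a • a • N) : (a + t) • N = a • N := by
  have haN : a • a • N ≤ a • N := Submodule.smul_le_self_of_tower a _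
  apply le_antisymm
  · rintro _ ⟨x, hx, rfl⟩
    simp only [DistribSMul.toLinearMap_apply, add_smul]
    exact add_mem (Submodule.smul_mem_pointwise_smul _ _ _ hx)
      (haN (ht (Submodule.smul_mem_pointwise_smul _ _ _ hx)))
  · refine Submodule.le_of_le_smul_of_le_jacobson_bot (I := maximalIdeal R) (hN.map _)
      (jacobson_eq_maximalIdeal _ bot_ne_top).ge ?_
    rintro _ ⟨x, hx, rfl⟩
    have hsplit : a • x = (a + t) • x - t • x := by rw [add_smul, add_sub_cancel_right]
    have htx : t • x ∈ maximalIdeal R • a • N := by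
      have := ht (Submodule.smul_mem_pointwise_smul _ _ _ hx)
      rw [← Submodule.ideal_span_singleton_smul] at this
      exact Submodule.smul_mono_left ((Ideal.span_singleton_le_iff_mem _).2 ha) this
    rw [DistribSMul.toLinearMap_apply, hsplit]
    exact sub_mem (Submodule.mem_sup_left (Submodule.smul_mem_pointwise_smul _ _ _ hx))
      (Submodule.mem_sup_right htx)

theorem exists_maximalIdeal_pow_le_annihilator [IsLocalRing R] [Finite M] :
    ∃ k, maximalIdeal R ^ k ≤ Module.annihilator R M := by
  have : Finite (AddMonoid.End M) := DFunLike.finite _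
  have : Finite (R ⧸ Module.annihilator R M) :=
    Finite.of_injective _ (RingHom.kerLift_injective (Module.toAddMonoidEnd R M))
  exact exists_maximalIdeal_pow_le_of_isArtinianRing_quotient _

end PointwiseSMul

section IwasawaGrowth

/-- The sequence `c` is eventually `n ↦ p ^ (μ p ^ n + λ n + ν)` for some natural numbers `μ`, `λ`
and some integer `ν`. -/
def HasIwasawaGrowth (p : ℕ) (c : ℕ → ℕ) : Prop :=
  ∃ (μ lam : ℕ) (ν : ℤ), ∀ᶠ n in atTop,
    (c n : ℝ) = (p : ℝ) ^ (((μ * p ^ n + lam * n : ℕ) : ℤ) + ν)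

variable {p : ℕ} {c d : ℕ → ℕ}

theorem HasIwasawaGrowth.congr (hc : HasIwasawaGrowth p c) (h : d =ᶠ[atTop] c) :
    HasIwasawaGrowth p d := by
  obtain ⟨μ, lam, ν, hc⟩ := hc
  refine ⟨μ, lam, ν, ?_⟩
  filter_upwards [hc, h] with n hn hdc
  rw [hdc, hn]

theorem HasIwasawaGrowth.eventually_ne_zero (hp : p ≠ 0) (hc : HasIwasawaGrowth p c) :
    ∀ᶠ n in atTop, c n ≠ 0 := by
  obtain ⟨μ, lam, ν, hc⟩ := hc
  filter_upwards [hc] with n hn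
  rw [← Nat.cast_ne_zero (R := ℝ), hn]
  exact zpow_ne_zero _ (Nat.cast_ne_zero.2 hp)

theorem HasIwasawaGrowth.mul (hp : p ≠ 0) (hc : HasIwasawaGrowth p c) (hd : HasIwasawaGrowth p d) :
    HasIwasawaGrowth p fun n => c n * d n := by
  obtain ⟨μ, lam, ν, hc⟩ := hc
  obtain ⟨μ', lam', ν', hd⟩ := hd
  refine ⟨μ + μ', lam + lam', ν + ν', ?_⟩
  filter_upwards [hc, hd] with n hcn hdn
  rw [Nat.cast_mul, hcn, hdn, ← zpow_add₀ (Nat.cast_ne_zero.2 hp)]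
  congr 1
  push_cast
  ring

theorem hasIwasawaGrowth_of_exponent_eq {b : ℕ → ℕ} {μ lam : ℕ} {ν : ℤ}
    (hc : ∀ᶠ n in atTop, c n = p ^ b n)
    (hb : ∀ᶠ n in atTop, (b n : ℤ) = μ * p ^ n + lam * n + ν) : HasIwasawaGrowth p c := by
  refine ⟨μ, lam, ν, ?_⟩
  filter_upwards [hc, hb] with n hcn hbn
  rw [hcn, Nat.cast_pow, ← zpow_natCast, hbn]
  push_cast
  rfl

theorem hasIwasawaGrowth_const (j : ℕ) : HasIwasawaGrowth p fun _ => p ^ j :=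
  hasIwasawaGrowth_of_exponent_eq (b := fun _ => j) (μ := 0) (lam := 0) (ν := j)
    (.of_forall fun _ => rfl) (.of_forall fun _ => by simp)

theorem hasIwasawaGrowth_of_linear_exponent {lam b N : ℕ}
    (hc : ∀ k, c (N + k) = p ^ (lam * k + b)) : HasIwasawaGrowth p c := by
  refine hasIwasawaGrowth_of_exponent_eq (b := fun n => lam * (n - N) + b) (μ := 0) (lam := lam)
    (ν := b - lam * N) ?_ ?_
  · filter_upwards [eventually_ge_atTop N] with n hn
    rw [← hc, Nat.add_sub_cancel' hn]
  · filter_upwards [eventually_ge_atTop N] with n hn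
    push_cast [hn]
    ring

theorem hasIwasawaGrowth_of_linear_exponent_pow_sub (hp : 1 < p) {μ b N s : ℕ}
    (hd : ∀ k, d (N + k) = p ^ (μ * k + b)) : HasIwasawaGrowth p fun n => d (p ^ n - s) := by
  have hlarge : ∀ᶠ n in atTop, s + N ≤ p ^ n :=
    (tendsto_pow_atTop_atTop_of_one_lt hp).eventually_ge_atTop _
  refine hasIwasawaGrowth_of_exponent_eq (b := fun n => μ * (p ^ n - (s + N)) + b) (μ := μ)
    (lam := 0) (ν := b - μ * (s + N)) ?_ ?_
  · filter_upwards [hlarge] with n hn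
    rw [← hd, ← Nat.sub_sub, Nat.add_sub_cancel' (by lia)]
  · filter_upwards [hlarge] with n hn
    push_cast [hn]
    ring

end IwasawaGrowth

section IwasawaFormula

variable {p : ℕ} [Fact p.Prime] {R M : Type*} [CommRing R] [Algebra ℤ_[p] R] [AddCommGroup M]
  [Module R M] [Module ℤ_[p] M] [IsScalarTower ℤ_[p] R M] {U V : ℕ → Submodule R M}

variable (p) in
/-- The quotients `M ⧸ U n` satisfy Iwasawa's formula: their `ℤ_p`-ranks are eventually constant
and the orders of their torsion submodules have Iwasawa growth. As `Nat.card` of an infinite type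
is `0`, the latter includes that the torsion submodules are eventually finite. -/
def HasIwasawaFormula (U : ℕ → Submodule R M) : Prop :=
  (∃ r, ∀ᶠ n in atTop, Module.finrank ℤ_[p] (M ⧸ U n) = r) ∧
    HasIwasawaGrowth p fun n => Nat.card (Submodule.torsion ℤ_[p] (M ⧸ U n))

theorem HasIwasawaFormula.of_submoduleRelIndex (hV : HasIwasawaFormula p V)
    (hle : ∀ᶠ n in atTop, U n ≤ V n)
    (hindex : HasIwasawaGrowth p fun n => submoduleRelIndex (U n) (V n)) :
    HasIwasawaFormula p U := by
  obtain ⟨⟨r, hr⟩, hcard⟩ := hV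
  have hne := hindex.eventually_ne_zero (NeZero.ne p)
  refine ⟨⟨r, ?_⟩, (hindex.mul (NeZero.ne p) hcard).congr ?_⟩
  · filter_upwards [hr, hle, hne] with n hrn hlen hnen
    rw [finrank_quotient_eq_of_submoduleRelIndex_ne_zero hlen hnen, hrn]
  · filter_upwards [hle, hne] with n hlen hnen
    exact card_torsion_quotient_eq_submoduleRelIndex_mul hlen hnen

theorem HasIwasawaFormula.of_linearEquiv {M' : Type*} [AddCommGroup M'] [Module R M']
    [Module ℤ_[p] M'] [IsScalarTower ℤ_[p] R M'] {U' : ℕ → Submodule R M'}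
    (hU : HasIwasawaFormula p U) (e : ∀ n, (M' ⧸ U' n) ≃ₗ[R] M ⧸ U n) :
    HasIwasawaFormula p U' := by
  simpa only [HasIwasawaFormula, ((e _).restrictScalars ℤ_[p]).finrank_eq,
    card_torsion_eq_of_linearEquiv ((e _).restrictScalars ℤ_[p])] using hU

theorem hasIwasawaFormula_const [Module.Finite ℤ_[p] M] (W : Submodule R M) :
    HasIwasawaFormula p fun _ => W := by
  obtain ⟨j, hj⟩ := exists_card_torsion_eq_prime_pow (A := ℤ_[p]) (N := M ⧸ W) (p := p)
    (by simp [PadicInt.maximalIdeal_eq_span_p])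
  exact ⟨⟨_, .of_forall fun _ => rfl⟩, by simpa only [hj] using hasIwasawaGrowth_const j⟩

end IwasawaFormula

section BaseCase

variable {p : ℕ} [Fact p.Prime] {M : Type*} [AddCommGroup M] [Module ℤ_[p]⟦X⟧ M] [Module ℤ_[p] M]
  [IsScalarTower ℤ_[p] ℤ_[p]⟦X⟧ M] [Module.Finite ℤ_[p] M]

theorem finite_quotient_natCast_pow_smul_top (k : ℕ) :
    Finite (M ⧸ (p : ℤ_[p]⟦X⟧) ^ k • (⊤ : Submodule ℤ_[p]⟦X⟧ M)) := by
  set W := (p : ℤ_[p]⟦X⟧) ^ k • (⊤ : Submodule ℤ_[p]⟦X⟧ M)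
  refine finite_of_maximalIdeal_pow_le_annihilator (A := ℤ_[p]) (k := k) ?_
  rw [PadicInt.maximalIdeal_eq_span_p, Ideal.span_singleton_pow, Ideal.span_singleton_le_iff_mem,
    Module.mem_annihilator]
  intro y
  obtain ⟨x, rfl⟩ := W.mkQ_surjective y
  have hmem : (p : ℤ_[p]⟦X⟧) ^ k • x ∈ W := Submodule.smul_mem_pointwise_smul _ _ _ trivial
  have hzero := (Submodule.Quotient.mk_eq_zero W).2 hmem
  rw [← Nat.cast_pow, Nat.cast_smul_eq_nsmul] at hzero ⊢
  exact hzero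

variable (M) in
theorem exists_forall_omegaN_smul_top_le_natCast_pow_smul (k : ℕ) : ∃ d, ∀ n ≥ d,
    omegaN p n • (⊤ : Submodule ℤ_[p]⟦X⟧ M) ≤ (p : ℤ_[p]⟦X⟧) ^ k • ⊤ := by
  set W := (p : ℤ_[p]⟦X⟧) ^ k • (⊤ : Submodule ℤ_[p]⟦X⟧ M)
  have : Finite (M ⧸ W) := finite_quotient_natCast_pow_smul_top k
  obtain ⟨d, hd⟩ := exists_maximalIdeal_pow_le_annihilator (R := ℤ_[p]⟦X⟧) (M := M ⧸ W)
  refine ⟨d, fun n hn => ?_⟩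
  rintro _ ⟨x, -, rfl⟩
  have hann := hd (Ideal.pow_le_pow_right (hn.trans n.le_succ) (omegaN_mem_maximalIdeal_pow n))
  exact (Submodule.Quotient.mk_eq_zero W).1 (Module.mem_annihilator.1 hann (W.mkQ x))

theorem omegaN_succ_smul_top {n : ℕ}
    (h : omegaN p n • (⊤ : Submodule ℤ_[p]⟦X⟧ M) ≤ (p : ℤ_[p]⟦X⟧) ^ 2 • ⊤) :
    omegaN p (n + 1) • (⊤ : Submodule ℤ_[p]⟦X⟧ M) = (p : ℤ_[p]⟦X⟧) • omegaN p n • ⊤ := by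
  have : Module.Finite ℤ_[p]⟦X⟧ M := Module.Finite.of_restrictScalars_finite ℤ_[p] _ _
  obtain ⟨t, ht⟩ := exists_omegaN_succ_eq (p := p) n
  rw [ht, mul_smul]
  refine add_smul_eq_smul_of_smul_le (IsNoetherian.noetherian _)
    natCast_mem_maximalIdeal_powerSeries ?_
  calc (omegaN p n * t) • omegaN p n • (⊤ : Submodule ℤ_[p]⟦X⟧ M)
      = omegaN p n • t • omegaN p n • ⊤ := mul_smul _ _ _
    _ ≤ omegaN p n • omegaN p n • ⊤ :=
        smul_mono_right _ (Submodule.smul_le_self_of_tower t _)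
    _ ≤ omegaN p n • (p : ℤ_[p]⟦X⟧) ^ 2 • ⊤ := smul_mono_right _ h
    _ = (p : ℤ_[p]⟦X⟧) • (p : ℤ_[p]⟦X⟧) • omegaN p n • ⊤ := by simp only [← mul_smul]; ring_nf

theorem exists_omegaN_add_smul_top : ∃ d, ∀ e,
    omegaN p (d + e) • (⊤ : Submodule ℤ_[p]⟦X⟧ M) = (p : ℤ_[p]⟦X⟧) ^ e • omegaN p d • ⊤ := by
  obtain ⟨d, hd⟩ := exists_forall_omegaN_smul_top_le_natCast_pow_smul (p := p) M 2
  refine ⟨d, fun e => ?_⟩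
  induction e with
  | zero => simp
  | succ e ih => rw [← add_assoc, omegaN_succ_smul_top (hd _ (by lia)), ih, ← mul_smul, ← pow_succ']

variable (p M) in
theorem hasIwasawaFormula_of_finite_padicInt :
    HasIwasawaFormula p fun n => omegaN p n • (⊤ : Submodule ℤ_[p]⟦X⟧ M) := by
  obtain ⟨d, hd⟩ := exists_omegaN_add_smul_top (p := p) (M := M)
  set W := omegaN p d • (⊤ : Submodule ℤ_[p]⟦X⟧ M)
  refine (hasIwasawaFormula_const (p := p) W).of_submoduleRelIndex ?_ ?_
  · filter_upwards [eventually_ge_atTop d] with n hn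
    rw [← Nat.add_sub_cancel' hn, hd]
    exact Submodule.smul_le_self_of_tower _ W
  · have : Module.Finite ℤ_[p] (W.map ((p : ℤ_[p]⟦X⟧) • W).mkQ) :=
      Module.Finite.of_injective
        ((W.map ((p : ℤ_[p]⟦X⟧) • W).mkQ).subtype.restrictScalars ℤ_[p]) Subtype.val_injective
    obtain ⟨j, hj⟩ := exists_submoduleRelIndex_eq_prime_pow (p := p) (V := W) le_rfl
    obtain ⟨e₀, lam, b, hb⟩ := exists_submoduleRelIndex_pow_add_smul_eq Fact.out _ W hj
    refine hasIwasawaGrowth_of_linear_exponent (lam := lam) (b := b) (N := d + e₀) fun k => ?_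
    rw [add_assoc, hd, hb]

end BaseCase

section ExtensionStep

theorem exists_forall_smul_top_inf_eq_smul {R M : Type*} [CommRing R] [AddCommGroup M] [Module R M]
    [IsNoetherian R M] {a : ℕ → R} (ha : ∀ ⦃m n⦄, m ≤ n → a m ∣ a n) (A : Submodule R M) :
    ∃ (C : Submodule R M) (m : ℕ), ∀ n ≥ m, a n • ⊤ ⊓ A = a n • C := by
  let preimage : ℕ →o Submodule R M :=
    { toFun := fun n => A.comap (LinearMap.lsmul R M (a n))
      monotone' := fun m n hmn x hx => by
        obtain ⟨b, hb⟩ := ha hmn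
        rw [Submodule.mem_comap, LinearMap.lsmul_apply, hb, mul_comm, mul_smul]
        exact A.smul_mem b hx }
  obtain ⟨m, hm⟩ := monotone_stabilizes_iff_noetherian.2 ‹_› preimage
  refine ⟨preimage m, m, fun n hn => ?_⟩
  rw [hm n hn, inf_comm]
  ext y
  constructor
  · rintro ⟨hy, x, -, rfl⟩
    exact ⟨x, hy, rfl⟩
  · rintro ⟨x, hx, rfl⟩
    exact ⟨hx, x, trivial, rfl⟩

variable {p : ℕ} [Fact p.Prime] {M : Type*} [AddCommGroup M] [Module ℤ_[p]⟦X⟧ M]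
  [Module.Finite ℤ_[p]⟦X⟧ M] {A : Submodule ℤ_[p]⟦X⟧ M}

-- On modules killed by `p`, multiplication by `ω_n / ω_m` agrees with multiplication by
-- `X ^ (p ^ n - p ^ m)`.
theorem exists_omegaN_smul_top_inf_eq_X_pow_smul (hA : (p : ℤ_[p]⟦X⟧) • A = ⊥) :
    ∃ m, ∀ n ≥ m, omegaN p n • ⊤ ⊓ A =
      (X : ℤ_[p]⟦X⟧) ^ (p ^ n - p ^ m) • (omegaN p m • ⊤ ⊓ A : Submodule ℤ_[p]⟦X⟧ M) := by
  obtain ⟨C, m, hC⟩ := exists_forall_smul_top_inf_eq_smul (fun _ _ => omegaN_dvd_omegaN (p := p)) A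
  refine ⟨m, fun n hn => ?_⟩
  have hB : (p : ℤ_[p]⟦X⟧) • (omegaN p m • ⊤ ⊓ A : Submodule ℤ_[p]⟦X⟧ M) = ⊥ :=
    le_bot_iff.1 (hA ▸ smul_mono_right _ inf_le_right)
  obtain ⟨k, rfl⟩ := Nat.exists_eq_add_of_le hn
  obtain ⟨v, hv, hdvd⟩ := exists_omegaN_add_eq_mul (p := p) m k
  rw [← smul_submodule_eq_of_dvd_sub hB hdvd, hC _ hn, hC m le_rfl, hv, mul_smul]

variable [Module ℤ_[p] M] [IsScalarTower ℤ_[p] ℤ_[p]⟦X⟧ M]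

theorem exists_submoduleRelIndex_X_smul_eq_prime_pow (hA : (p : ℤ_[p]⟦X⟧) • A = ⊥) :
    ∃ j, submoduleRelIndex ((X : ℤ_[p]⟦X⟧) • A) A = p ^ j := by
  have : Module.Finite ℤ_[p] (A.map ((X : ℤ_[p]⟦X⟧) • A).mkQ) := by
    refine finite_padicInt_of_mem_annihilator not_natCast_dvd_X (Module.mem_annihilator.2 ?_)
    rintro ⟨-, x, hx, rfl⟩
    exact Subtype.ext ((Submodule.Quotient.mk_eq_zero _).2
      (Submodule.smul_mem_pointwise_smul _ _ _ hx))
  exact exists_submoduleRelIndex_eq_prime_pow (hA.trans_le bot_le)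

theorem exists_submoduleRelIndex_omegaN_smul_top_inf_eq_prime_pow (hA : (p : ℤ_[p]⟦X⟧) • A = ⊥)
    (m : ℕ) : ∃ i, submoduleRelIndex (omegaN p m • ⊤ ⊓ A) A = p ^ i := by
  have hle : (X : ℤ_[p]⟦X⟧) ^ p ^ m • A ≤ omegaN p m • ⊤ ⊓ A := by
    rw [← smul_submodule_eq_of_dvd_sub hA (natCast_dvd_omegaN_sub_X_pow m)]
    exact le_inf (smul_mono_right _ le_top) (Submodule.smul_le_self_of_tower _ A)
  obtain ⟨j, hj⟩ := exists_submoduleRelIndex_X_smul_eq_prime_pow hA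
  have hdvd : submoduleRelIndex (omegaN p m • ⊤ ⊓ A) A ∣ p ^ (j * p ^ m) :=
    calc submoduleRelIndex (omegaN p m • ⊤ ⊓ A) A
        ∣ submoduleRelIndex ((X : ℤ_[p]⟦X⟧) ^ p ^ m • A) A :=
          AddSubgroup.relIndex_dvd_of_le_left _ (Submodule.toAddSubgroup_mono hle)
      _ ∣ submoduleRelIndex ((X : ℤ_[p]⟦X⟧) • A) A ^ p ^ m := submoduleRelIndex_pow_smul_dvd _ _ _
      _ = p ^ (j * p ^ m) := by rw [hj, pow_mul]
  exact ((Nat.dvd_prime_pow Fact.out).1 hdvd).imp fun _ h => h.2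

theorem hasIwasawaGrowth_submoduleRelIndex_omegaN_smul_top (hA : (p : ℤ_[p]⟦X⟧) • A = ⊥) :
    HasIwasawaGrowth p fun n => submoduleRelIndex (omegaN p n • ⊤) A := by
  obtain ⟨m, hm⟩ := exists_omegaN_smul_top_inf_eq_X_pow_smul hA
  obtain ⟨i, hi⟩ := exists_submoduleRelIndex_omegaN_smul_top_inf_eq_prime_pow hA m
  set B : Submodule ℤ_[p]⟦X⟧ M := omegaN p m • ⊤ ⊓ A
  have hB : (p : ℤ_[p]⟦X⟧) • B = ⊥ := le_bot_iff.1 (hA ▸ smul_mono_right _ inf_le_right)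
  obtain ⟨j, hj⟩ := exists_submoduleRelIndex_X_smul_eq_prime_pow hB
  obtain ⟨e₀, μ, b, hb⟩ := exists_submoduleRelIndex_pow_add_smul_eq Fact.out _ B hj
  have hgrowth : HasIwasawaGrowth p
      fun n => submoduleRelIndex ((X : ℤ_[p]⟦X⟧) ^ (p ^ n - p ^ m) • B) B :=
    hasIwasawaGrowth_of_linear_exponent_pow_sub (Fact.out : p.Prime).one_lt
      (d := fun e => submoduleRelIndex ((X : ℤ_[p]⟦X⟧) ^ e • B) B) hb
  refine (hgrowth.mul (NeZero.ne p) (hasIwasawaGrowth_const i)).congr ?_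
  filter_upwards [eventually_ge_atTop m] with n hn
  calc submoduleRelIndex (omegaN p n • ⊤) A
      = submoduleRelIndex (omegaN p n • ⊤ ⊓ A) A := (AddSubgroup.inf_relIndex_right _ _).symm
    _ = submoduleRelIndex ((X : ℤ_[p]⟦X⟧) ^ (p ^ n - p ^ m) • B) B * p ^ i := by
        rw [hm n hn, ← hi, submoduleRelIndex_mul (Submodule.smul_le_self_of_tower _ B) inf_le_right]

theorem HasIwasawaFormula.of_quotient (hA : (p : ℤ_[p]⟦X⟧) • A = ⊥)
    (h : HasIwasawaFormula p fun n => omegaN p n • (⊤ : Submodule ℤ_[p]⟦X⟧ (M ⧸ A))) :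
    HasIwasawaFormula p fun n => omegaN p n • (⊤ : Submodule ℤ_[p]⟦X⟧ M) := by
  have hmap (n : ℕ) : (omegaN p n • ⊤ : Submodule ℤ_[p]⟦X⟧ M).map A.mkQ = omegaN p n • ⊤ := by
    rw [Submodule.map_pointwise_smul, Submodule.map_top, Submodule.range_mkQ]
  have hsup : HasIwasawaFormula p fun n => A ⊔ omegaN p n • ⊤ := by
    simp only [← hmap] at h
    exact h.of_linearEquiv fun n => (Submodule.quotientQuotientEquivQuotientSup A _).symm
  refine hsup.of_submoduleRelIndex (.of_forall fun _ => le_sup_right) ?_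
  refine (hasIwasawaGrowth_submoduleRelIndex_omegaN_smul_top hA).congr (.of_forall fun n => ?_)
  simp only [submoduleRelIndex, Submodule.sup_toAddSubgroup, AddSubgroup.relIndex_sup_right]

end ExtensionStep

-- Multiplication by `p` embeds `M/M[p]` into `M`, so `pᵏg` annihilates `M/M[p]` as soon as
-- `pᵏ⁺¹g` annihilates `M`.
theorem hasIwasawaFormula_of_pow_mul_mem_annihilator {p : ℕ} [Fact p.Prime] {g : ℤ_[p]⟦X⟧}
    (hg : ¬ (p : ℤ_[p]⟦X⟧) ∣ g) (k : ℕ) (M : Type*) [AddCommGroup M] [Module ℤ_[p]⟦X⟧ M]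
    [Module ℤ_[p] M] [IsScalarTower ℤ_[p] ℤ_[p]⟦X⟧ M] [Module.Finite ℤ_[p]⟦X⟧ M]
    (hM : (p : ℤ_[p]⟦X⟧) ^ k * g ∈ Module.annihilator ℤ_[p]⟦X⟧ M) :
    HasIwasawaFormula p fun n => omegaN p n • (⊤ : Submodule ℤ_[p]⟦X⟧ M) := by
  induction k generalizing M with
  | zero =>
    rw [pow_zero, one_mul] at hM
    have := finite_padicInt_of_mem_annihilator hg hM
    exact hasIwasawaFormula_of_finite_padicInt p M
  | succ k ih =>
    let A := Submodule.torsionBy ℤ_[p]⟦X⟧ M p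
    have hA : (p : ℤ_[p]⟦X⟧) • A = ⊥ := by
      rw [eq_bot_iff]
      rintro _ ⟨x, hx, rfl⟩
      exact hx
    refine HasIwasawaFormula.of_quotient hA (ih (M ⧸ A) (Module.mem_annihilator.2 fun y => ?_))
    obtain ⟨x, rfl⟩ := A.mkQ_surjective y
    rw [← map_smul]
    refine (Submodule.Quotient.mk_eq_zero A).2 ?_
    rw [Submodule.mem_torsionBy_iff, ← mul_smul, ← mul_assoc, ← pow_succ']
    exact Module.mem_annihilator.1 hM x

theorem statement1_general (p : ℕ) [Fact p.Prime]
    (M : Type*) [AddCommGroup M] [Module (PowerSeries ℤ_[p]) M]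
    [Module ℤ_[p] M] [IsScalarTower ℤ_[p] (PowerSeries ℤ_[p]) M]
    [Module.Finite (PowerSeries ℤ_[p]) M]
    (htors : Module.IsTorsion (PowerSeries ℤ_[p]) M) :
    ∃ (r μ lam : ℕ) (ν : ℤ) (N : ℕ), ∀ n ≥ N,
      Module.finrank ℤ_[p]
        (M ⧸ (Ideal.span {omegaN p n} • (⊤ : Submodule (PowerSeries ℤ_[p]) M))) = r ∧
      Finite (Submodule.torsion ℤ_[p]
        (M ⧸ (Ideal.span {omegaN p n} • (⊤ : Submodule (PowerSeries ℤ_[p]) M)))) ∧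
      (Nat.card (Submodule.torsion ℤ_[p]
        (M ⧸ (Ideal.span {omegaN p n} • (⊤ : Submodule (PowerSeries ℤ_[p]) M)))) : ℝ)
        = (p : ℝ) ^ (((μ * p ^ n + lam * n : ℕ) : ℤ) + ν) := by
  obtain ⟨k, g, hg, hgM⟩ := exists_pow_mul_mem_annihilator htors
  obtain ⟨⟨r, hrank⟩, hgrowth⟩ := hasIwasawaFormula_of_pow_mul_mem_annihilator hg k M hgM
  have hne := hgrowth.eventually_ne_zero (NeZero.ne p)
  obtain ⟨μ, lam, ν, hcard⟩ := hgrowth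
  obtain ⟨N, hN⟩ := eventually_atTop.1 (hrank.and (hne.and hcard))
  refine ⟨r, μ, lam, ν, N, fun n hn => ?_⟩
  obtain ⟨hrank, hne, hcard⟩ := hN n hn
  rw [Submodule.ideal_span_singleton_smul]
  exact ⟨hrank, Nat.finite_of_card_ne_zero hne, hcard⟩

/-- For a finitely generated torsion `Λ = ℤ_p[[T]]`-module `M`, there are
nonnegative integers `r, μ, λ`, an integer `ν` and `N` such that for all `n ≥ N` the
`ℤ_p`-rank of `M/ω_n M` equals `r` and the torsion subgroup `(M/ω_n M)[p^∞]` is finite of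
order `p^{μ p^n + λ n + ν}`. -/
theorem statement1 (p : ℕ) [Fact p.Prime] (hp : Odd p)
    (M : Type*) [AddCommGroup M] [Module (PowerSeries ℤ_[p]) M]
    [Module ℤ_[p] M] [IsScalarTower ℤ_[p] (PowerSeries ℤ_[p]) M]
    [Module.Finite (PowerSeries ℤ_[p]) M]
    (htors : Module.IsTorsion (PowerSeries ℤ_[p]) M) :
    ∃ (r μ lam : ℕ) (ν : ℤ) (N : ℕ), ∀ n ≥ N,
      Module.finrank ℤ_[p]
        (M ⧸ (Ideal.span {omegaN p n} • (⊤ : Submodule (PowerSeries ℤ_[p]) M))) = r ∧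
      Finite (Submodule.torsion ℤ_[p]
        (M ⧸ (Ideal.span {omegaN p n} • (⊤ : Submodule (PowerSeries ℤ_[p]) M)))) ∧
      (Nat.card (Submodule.torsion ℤ_[p]
        (M ⧸ (Ideal.span {omegaN p n} • (⊤ : Submodule (PowerSeries ℤ_[p]) M)))) : ℝ)
        = (p : ℝ) ^ (((μ * p ^ n + lam * n : ℕ) : ℤ) + ν) := by
  exact statement1_general p M htors
end

section
/- Let M be a finitely generated torsion Λ-module such that M/ω_nM is finite for every n ≥ 0. Then there exist nonnegative integers μ, λ, an integer ν, and N ∈ ℕ such that #(M/ω_nM) = p^{μ·p^n + λ·n + ν} for all n ≥ N. -/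
open PowerSeries

/-!
Write `M[f]` for the kernel of multiplication by `f`. By the snake lemma the Herbrand quotient
`#(M/fM) / #M[f]` is multiplicative in short exact sequences, and it is `1` on finite modules.

Let `A` be the `p`-power torsion of `M`. Modulo `p` the element `ω_n` is `T^(p^n)`, and a finitely
generated module killed by `p` is `T`-torsion-free up to a finite submodule; dévissage along the
powers of `p` then shows that the Herbrand quotient of `ω_n` on `A` is `p^(μ p^n)`.

On `Q = M/A` the elements `p` and `ω_n` are regular. The Herbrand quotient of `T` on `Q/pQ` is `1`,
which forces `Q/pQ` to be killed by a power of `T`, so `ω_n Q ⊆ pQ` for large `n`. Writing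
`ω_{n+1} = ω_n (p + ω_n h)`, Nakayama's lemma shows that the second factor has the same image on
`Q` as `p`, so `#(Q/ω_n Q)` is multiplied by the constant `#(Q/pQ) = p^λ` in each step.

Since `ω_n` divides `ω_{n+1}`, the submodules `M[ω_n]` increase with `n` and become stationary;
their order contributes to `ν`.
-/

namespace Iwasawa

open Function Submodule
open scoped Pointwise

/-! ### Cokernels and kernels of multiplication by a scalar -/

section Card

variable {R : Type*} [CommRing R]

theorem card_eq_card_range_mul_card_range_of_exact {M₁ M₂ M₃ : Type*}
    [AddCommGroup M₁] [Module R M₁] [AddCommGroup M₂] [Module R M₂] [AddCommGroup M₃] [Module R M₃]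
    {i : M₁ →ₗ[R] M₂} {q : M₂ →ₗ[R] M₃} (hiq : Exact i q) :
    Nat.card M₂ = Nat.card i.range * Nat.card q.range := by
  rw [card_eq_card_quotient_mul_card i.range, ← hiq.linearMap_ker_eq,
    Nat.card_congr q.quotKerEquivRange.toEquiv]

theorem exact_torsionBy_subtype_lsmul (f : R) (M : Type*) [AddCommGroup M] [Module R M] :
    Exact (torsionBy R M f).subtype (LinearMap.lsmul R M f) := fun x ↦ by simp

theorem exact_lsmul_mkQ_smul_top (f : R) (M : Type*) [AddCommGroup M] [Module R M] :
    Exact (LinearMap.lsmul R M f) (f • (⊤ : Submodule R M)).mkQ := fun x ↦ by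
  simp [mem_smul_pointwise_iff_exists]

theorem comp_lsmul_eq_lsmul_comp (f : R) {M N : Type*} [AddCommGroup M] [Module R M]
    [AddCommGroup N] [Module R N] (φ : M →ₗ[R] N) :
    φ ∘ₗ LinearMap.lsmul R M f = LinearMap.lsmul R N f ∘ₗ φ := by
  ext; simp

section ShortExact

variable {M₁ M₂ M₃ : Type*} [AddCommGroup M₁] [Module R M₁] [AddCommGroup M₂] [Module R M₂]
  [AddCommGroup M₃] [Module R M₃]

/-- The functor `M ↦ M[f]` on morphisms. -/
def torsionByMap (f : R) (φ : M₁ →ₗ[R] M₂) : torsionBy R M₁ f →ₗ[R] torsionBy R M₂ f :=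
  φ.restrict fun x hx ↦ by
    rw [mem_torsionBy_iff] at hx ⊢
    rw [← map_smul, hx, map_zero]

theorem torsionByMap_injective (f : R) {i : M₁ →ₗ[R] M₂} (hi : Injective i) :
    Injective (torsionByMap f i) := fun _ _ hxy ↦ Subtype.ext (hi congr(($hxy : M₂)))

theorem torsionByMap_exact (f : R) {i : M₁ →ₗ[R] M₂} {q : M₂ →ₗ[R] M₃} (hi : Injective i)
    (hiq : Exact i q) : Exact (torsionByMap f i) (torsionByMap f q) := by
  rintro ⟨x, hx⟩
  constructor
  · intro hqx
    obtain ⟨y, rfl⟩ := (hiq x).1 congr(($hqx : M₃))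
    refine ⟨⟨y, hi ?_⟩, rfl⟩
    simpa using hx
  · rintro ⟨y, hy⟩
    rw [← hy]
    exact Subtype.ext (hiq.apply_apply_eq_zero y)

/- Multiplicativity of the Herbrand quotient. With the denominators cleared, the identity persists
under the convention that `Nat.card` is `0` on infinite types. -/
theorem card_quotSMulTop_mul_card_torsionBy_of_exact (f : R) {i : M₁ →ₗ[R] M₂} {q : M₂ →ₗ[R] M₃}
    (hi : Injective i) (hiq : Exact i q) (hq : Surjective q) :
    Nat.card (QuotSMulTop f M₂) * (Nat.card (torsionBy R M₁ f) * Nat.card (torsionBy R M₃ f)) =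
      Nat.card (QuotSMulTop f M₁) * Nat.card (QuotSMulTop f M₃) * Nat.card (torsionBy R M₂ f) := by
  let δ : torsionBy R M₃ f →ₗ[R] QuotSMulTop f M₁ :=
    SnakeLemma.δ' _ _ _ i q hiq i q hiq
      (comp_lsmul_eq_lsmul_comp f i) (comp_lsmul_eq_lsmul_comp f q)
      _ (exact_torsionBy_subtype_lsmul f M₃) _ (exact_lsmul_mkQ_smul_top f M₁) hq hi
  have exact_δ_right : Exact (torsionByMap f q) δ :=
    SnakeLemma.exact_δ'_right _ _ _ i q hiq i q hiq _ _ _ (exact_torsionBy_subtype_lsmul f M₂)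
      _ _ _ _ hq hi _ rfl (injective_subtype _)
  have exact_δ_left : Exact δ (QuotSMulTop.map f i) :=
    SnakeLemma.exact_δ'_left _ _ _ i q hiq i q hiq _ _ _ _ _ _ _ (exact_lsmul_mkQ_smul_top f M₂)
      hq hi _ (QuotSMulTop.map_comp_mkQ f i) (mkQ_surjective _)
  have card_range_torsionByMap : Nat.card (torsionByMap f i).range = Nat.card (torsionBy R M₁ f) :=
    Nat.card_congr (LinearEquiv.ofInjective _ (torsionByMap_injective f hi)).toEquiv.symm
  have card_range_map : Nat.card (QuotSMulTop.map f q).range = Nat.card (QuotSMulTop f M₃) := by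
    rw [LinearMap.range_eq_top.2 (QuotSMulTop.map_surjective f hq), Nat.card_congr topEquiv.toEquiv]
  rw [card_eq_card_range_mul_card_range_of_exact (torsionByMap_exact f hi hiq),
    card_eq_card_range_mul_card_range_of_exact exact_δ_right,
    card_eq_card_range_mul_card_range_of_exact exact_δ_left,
    card_eq_card_range_mul_card_range_of_exact (QuotSMulTop.map_exact f hiq hq),
    card_range_torsionByMap, card_range_map]
  ring

end ShortExact

variable {M : Type*} [AddCommGroup M] [Module R M]

theorem card_torsionBy_eq_one {f : R} (hf : IsSMulRegular M f) :
    Nat.card (torsionBy R M f) = 1 := by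
  rw [(isSMulRegular_iff_torsionBy_eq_bot M f).1 hf, Nat.card_unique]

theorem card_quotSMulTop_eq_card_torsionBy [Finite M] (f : R) :
    Nat.card (QuotSMulTop f M) = Nat.card (torsionBy R M f) := by
  have card_eq : Nat.card (torsionBy R M f) * Nat.card (LinearMap.lsmul R M f).range =
      Nat.card (LinearMap.lsmul R M f).range * Nat.card (QuotSMulTop f M) := by
    have h₁ := card_eq_card_range_mul_card_range_of_exact (exact_torsionBy_subtype_lsmul f M)
    have h₂ := card_eq_card_range_mul_card_range_of_exact (exact_lsmul_mkQ_smul_top f M)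
    rw [range_subtype] at h₁
    rw [range_mkQ, Nat.card_congr topEquiv.toEquiv] at h₂
    exact h₁.symm.trans h₂
  exact (Nat.eq_of_mul_eq_mul_left Nat.card_pos ((mul_comm _ _).trans card_eq)).symm

theorem card_quotSMulTop_mul {f : R} (g : R) (hf : IsSMulRegular M f) :
    Nat.card (QuotSMulTop (f * g) M) = Nat.card (QuotSMulTop f M) * Nat.card (QuotSMulTop g M) := by
  have index_map := (g • (⊤ : Submodule R M)).toAddSubgroup.index_map_of_injective
    (f := DistribSMul.toAddMonoidHom M f) hf
  rw [AddMonoidHom.range_eq_map, mul_comm] at index_map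
  rw [QuotSMulTop, mul_smul]
  exact index_map

theorem card_quotSMulTop_pow {f : R} (hf : IsSMulRegular M f) (m : ℕ) :
    Nat.card (QuotSMulTop (f ^ m) M) = Nat.card (QuotSMulTop f M) ^ m := by
  induction m with
  | zero =>
    have : Subsingleton (QuotSMulTop (f ^ 0) M) := by
      rw [Submodule.Quotient.subsingleton_iff, pow_zero, one_smul]
    rw [Nat.card_unique, pow_zero]
  | succ m ih => rw [pow_succ', card_quotSMulTop_mul _ hf, ih, pow_succ']

theorem card_quotSMulTop_of_finite_submodule {f : R} (A : Submodule R M) [Finite A]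
    (hf : IsSMulRegular (M ⧸ A) f) : Nat.card (QuotSMulTop f M) =
      Nat.card (QuotSMulTop f (M ⧸ A)) * Nat.card (torsionBy R M f) := by
  have h := card_quotSMulTop_mul_card_torsionBy_of_exact f A.injective_subtype
    (LinearMap.exact_subtype_mkQ A) A.mkQ_surjective
  rw [card_torsionBy_eq_one hf, card_quotSMulTop_eq_card_torsionBy (M := A), mul_one, mul_assoc,
    mul_comm] at h
  exact Nat.eq_of_mul_eq_mul_left Nat.card_pos h

theorem card_quotSMulTop_quotSMulTop_eq_card_torsionBy {f g : R} (hf : IsSMulRegular M f)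
    (hg : IsSMulRegular M g) [Finite (QuotSMulTop f M)] :
    Nat.card (QuotSMulTop f (QuotSMulTop g M)) = Nat.card (torsionBy R (QuotSMulTop g M) f) := by
  have h := card_quotSMulTop_mul_card_torsionBy_of_exact f (i := LinearMap.lsmul R M g) hg
    (exact_lsmul_mkQ_smul_top g M) (mkQ_surjective _)
  rw [card_torsionBy_eq_one hf, one_mul, mul_one] at h
  exact (Nat.eq_of_mul_eq_mul_left Nat.card_pos h).symm

end Card

section Regular

variable {R M : Type*} [CommRing R] [AddCommGroup M] [Module R M]

theorem exists_isSMulRegular_quotient_torsionBy_pow [IsNoetherian R M] (f : R) :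
    ∃ b, IsSMulRegular (M ⧸ torsionBy R M (f ^ b)) f := by
  let kernels : ℕ →o Submodule R M :=
    ⟨fun b ↦ torsionBy R M (f ^ b), fun _ _ hab ↦
      torsionBy_le_torsionBy_of_dvd _ _ (pow_dvd_pow f hab)⟩
  obtain ⟨b, hb⟩ := monotone_stabilizes_iff_noetherian.2 ‹IsNoetherian R M› kernels
  have hb' : torsionBy R M (f ^ b) = torsionBy R M (f ^ (b + 1)) := hb _ b.le_succ
  refine ⟨b, (isSMulRegular_quotient_iff_mem_of_smul_mem _ _).2 fun x hx ↦ ?_⟩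
  rwa [hb', mem_torsionBy_iff, pow_succ, mul_smul]

theorem subsingleton_of_card_quotSMulTop_eq_one [Module.Finite R M] {f : R}
    (hf : f ∈ (⊥ : Ideal R).jacobson) (hcard : Nat.card (QuotSMulTop f M) = 1) :
    Subsingleton M := by
  by_contra! _
  have smul_top : f • (⊤ : Submodule R M) = ⊤ :=
    Submodule.Quotient.subsingleton_iff.1 (Nat.card_eq_one_iff_unique.1 hcard).1
  exact top_ne_pointwise_smul_of_mem_jacobson_annihilator (Ideal.jacobson_mono bot_le hf)
    smul_top.symm

/- `M` and `M ⧸ A` have the same Herbrand quotient, so `f` acts surjectively on `M ⧸ A`. -/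
theorem eq_top_of_card_quotSMulTop_eq_card_torsionBy [Module.Finite R M] {f : R}
    (hf : f ∈ (⊥ : Ideal R).jacobson) [Finite (QuotSMulTop f M)]
    (hcard : Nat.card (QuotSMulTop f M) = Nat.card (torsionBy R M f))
    (A : Submodule R M) [Finite A] (hA : IsSMulRegular (M ⧸ A) f) : A = ⊤ := by
  have h := card_quotSMulTop_of_finite_submodule A hA
  rw [← hcard, eq_comm, Nat.mul_eq_right Nat.card_pos.ne'] at h
  exact Submodule.Quotient.subsingleton_iff.1 (subsingleton_of_card_quotSMulTop_eq_one hf h)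

theorem mem_annihilator_quotSMulTop_iff {f g : R} :
    f ∈ Module.annihilator R (QuotSMulTop g M) ↔ ∀ x : M, f • x ∈ g • (⊤ : Submodule R M) := by
  simp [Module.mem_annihilator, (mkQ_surjective _).forall, ← Submodule.Quotient.mk_smul]

theorem isSMulRegular_of_mem_annihilator_quotSMulTop [Module.Finite R M] {f g : R}
    (hf : IsSMulRegular M f) (hfg : f ∈ Module.annihilator R (QuotSMulTop g M)) :
    IsSMulRegular M g := by
  -- Orzech's theorem, applied to the two projections of the fibre product of `g` and `f`.
  let N := (LinearMap.lsmul R M g ∘ₗ LinearMap.fst R M M).eqLocus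
    (LinearMap.lsmul R M f ∘ₗ LinearMap.snd R M M)
  have fst_injective : Injective (LinearMap.fst R M M ∘ₗ N.subtype) := by
    rintro ⟨⟨x, y⟩, hy : g • x = f • y⟩ ⟨⟨x', z⟩, hz : g • x' = f • z⟩ (rfl : x = x')
    obtain rfl : y = z := hf (hy.symm.trans hz)
    rfl
  have snd_surjective : Surjective (LinearMap.snd R M M ∘ₗ N.subtype) := by
    intro y
    obtain ⟨x, -, hx⟩ := mem_annihilator_quotSMulTop_iff.1 hfg y
    exact ⟨⟨(x, y), hx⟩, rfl⟩
  have snd_injective : Injective (LinearMap.snd R M M ∘ₗ N.subtype) :=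
    OrzechProperty.injective_of_surjective_of_injective _ _ fst_injective snd_surjective
  refine .of_right_eq_zero_of_smul fun x hx ↦ ?_
  have hN : (x, (0 : M)) ∈ N := by simpa [N] using hx
  exact congr(($(@snd_injective ⟨_, hN⟩ 0 rfl) : M × M).1)

theorem add_mul_smul_top_eq_smul_top [Module.Finite R M] {f g w : R}
    (hw : w ∈ (⊥ : Ideal R).jacobson) (hg : g ∈ Module.annihilator R (QuotSMulTop f M)) :
    (f + w * g) • (⊤ : Submodule R M) = f • ⊤ := by
  have smul_mem (x : M) : (w * g) • x ∈ w • f • (⊤ : Submodule R M) := by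
    rw [mul_smul]
    exact smul_mem_pointwise_smul _ w _ (mem_annihilator_quotSMulTop_iff.1 hg x)
  apply le_antisymm
  · rintro _ ⟨x, -, rfl⟩
    change (f + w * g) • x ∈ _
    rw [add_smul]
    exact add_mem (smul_mem_pointwise_smul x f ⊤ mem_top) (smul_le_self_of_tower w _ (smul_mem x))
  · refine le_of_le_smul_of_le_jacobson_bot (I := Ideal.span {w})
      (Module.Finite.fg_top.map _) (by simpa [Ideal.span_singleton_le_iff_mem] using hw) ?_
    rw [ideal_span_singleton_smul]
    rintro _ ⟨x, -, rfl⟩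
    change f • x ∈ _
    rw [← add_sub_cancel_right (f • x) ((w * g) • x), ← add_smul]
    exact sub_mem (mem_sup_left (smul_mem_pointwise_smul x _ ⊤ mem_top))
      (mem_sup_right (smul_mem x))

theorem finite_of_le_radical_annihilator [IsNoetherianRing R] [Module.Finite R M] {I : Ideal R}
    [Finite (R ⧸ I)] (hI : I ≤ (Module.annihilator R M).radical) : Finite M := by
  let J := Module.annihilator R M
  obtain ⟨k, hk⟩ := Ideal.exists_pow_le_of_le_radical_of_fg hI (IsNoetherian.noetherian _)
  have : Finite (R ⧸ I ^ k) := Ideal.finite_quotient_pow (IsNoetherian.noetherian I) k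
  have : Finite (R ⧸ J) := Finite.of_surjective _ (Ideal.Quotient.factor_surjective hk)
  let : Module (R ⧸ J) M := (Module.isTorsionBySet_annihilator R M).module
  have : IsScalarTower R (R ⧸ J) M := (Module.isTorsionBySet_annihilator R M).isScalarTower
  have : Module.Finite (R ⧸ J) M := .of_restrictScalars_finite R _ _
  exact Module.finite_of_finite (R ⧸ J)

theorem finite_quotSMulTop_quotient (f : R) [Finite (QuotSMulTop f M)] (A : Submodule R M) :
    Finite (QuotSMulTop f (M ⧸ A)) :=
  .of_surjective _ (QuotSMulTop.map_surjective f A.mkQ_surjective)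

end Regular

theorem exists_card_eq_prime_pow (p : ℕ) [Fact p.Prime] (R M : Type*) [CommRing R]
    [Algebra ℤ_[p] R] [AddCommGroup M] [Module R M] [Finite M] : ∃ k, Nat.card M = p ^ k := by
  refine ⟨_, Nat.eq_prime_pow_of_unique_prime_dvd Nat.card_pos.ne' fun {d} hd hdvd ↦ ?_⟩
  by_contra hne
  have : Fact d.Prime := ⟨hd⟩
  obtain ⟨x, hx⟩ := exists_prime_addOrderOf_dvd_card' d hdvd
  have smul_x : (d : R) • x = 0 := by
    rw [Nat.cast_smul_eq_nsmul, ← hx, addOrderOf_nsmul_eq_zero]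
  have isUnit_padic : IsUnit (d : ℤ_[p]) := by
    rw [PadicInt.isUnit_iff, PadicInt.norm_natCast_eq_one_iff]
    exact (Nat.coprime_primes Fact.out hd).2 (Ne.symm hne)
  have isUnit_d : IsUnit (d : R) := by simpa using isUnit_padic.map (algebraMap ℤ_[p] R)
  rw [isUnit_d.smul_eq_zero] at smul_x
  rw [smul_x, addOrderOf_zero] at hx
  exact hd.one_lt.ne hx

/-! ### The elements `ω_n` -/

theorem mem_jacobson_bot_of_constantCoeff_eq_zero {A : Type*} [CommRing A] {f : A⟦X⟧}
    (hf : constantCoeff f = 0) : f ∈ (⊥ : Ideal A⟦X⟧).jacobson :=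
  Ideal.mem_jacobson_bot.2 fun g ↦ by simp [isUnit_iff_constantCoeff, hf]

variable {p : ℕ} [Fact p.Prime]

theorem omegaN_zero : omegaN p 0 = X := by simp [omegaN]

theorem omegaN_mem_jacobson_bot (n : ℕ) : omegaN p n ∈ (⊥ : Ideal ℤ_[p]⟦X⟧).jacobson :=
  mem_jacobson_bot_of_constantCoeff_eq_zero (by simp [omegaN])

theorem exists_omegaN_succ_eq (n : ℕ) :
    ∃ h : ℤ_[p]⟦X⟧, omegaN p (n + 1) = omegaN p n * (p + omegaN p n * h) := by
  obtain ⟨h, hh⟩ := Polynomial.powAddExpansion 1 (omegaN p n) p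
  refine ⟨h, ?_⟩
  rw [omegaN, pow_succ, pow_mul, ← add_sub_cancel 1 ((1 + X) ^ p ^ n), ← omegaN, hh]
  ring

theorem omegaN_dvd_omegaN {m n : ℕ} (hmn : m ≤ n) : omegaN p m ∣ omegaN p n := by
  induction n, hmn using Nat.le_induction with
  | base => rfl
  | succ n _ ih =>
    obtain ⟨h, hh⟩ := exists_omegaN_succ_eq (p := p) n
    exact ih.trans ⟨_, hh⟩

theorem exists_omegaN_eq_X_pow_add (n : ℕ) :
    ∃ s : ℤ_[p]⟦X⟧, omegaN p n = X ^ p ^ n + (p : ℤ_[p]⟦X⟧) * s := by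
  obtain ⟨s, hs⟩ := exists_add_pow_prime_pow_eq (Fact.out : p.Prime) (1 : ℤ_[p]⟦X⟧) X n
  refine ⟨X * s, ?_⟩
  rw [omegaN, hs, one_pow]
  ring

instance finite_quotient_span_p_X : Finite (ℤ_[p]⟦X⟧ ⧸ Ideal.span {(p : ℤ_[p]⟦X⟧), X}) := by
  let residue : ℤ_[p]⟦X⟧ →+* ZMod p := PadicInt.toZMod.comp constantCoeff
  have ker_le : RingHom.ker residue ≤ Ideal.span {(p : ℤ_[p]⟦X⟧), X} := by
    intro f hf
    have hf' : constantCoeff f ∈ RingHom.ker (PadicInt.toZMod (p := p)) := hf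
    rw [PadicInt.ker_toZMod, PadicInt.maximalIdeal_eq_span_p, Ideal.mem_span_singleton] at hf'
    obtain ⟨c, hc⟩ := hf'
    obtain ⟨g, hg⟩ : X ∣ f - C (constantCoeff f) := X_dvd_iff.2 (by simp)
    rw [hc, map_mul, map_natCast] at hg
    exact Ideal.mem_span_pair.2 ⟨C c, g, by linear_combination -hg⟩
  have : Finite (ZMod p) := @Finite.of_fintype _ (ZMod.fintype p)
  have : Finite (ℤ_[p]⟦X⟧ ⧸ RingHom.ker residue) := .of_injective _ residue.kerLift_injective
  exact .of_surjective _ (Ideal.Quotient.factor_surjective ker_le)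

variable {M : Type*} [AddCommGroup M] [Module ℤ_[p]⟦X⟧ M] [Module.Finite ℤ_[p]⟦X⟧ M]

theorem finite_of_mem_radical_annihilator
    (hp : (p : ℤ_[p]⟦X⟧) ∈ (Module.annihilator ℤ_[p]⟦X⟧ M).radical)
    (hX : X ∈ (Module.annihilator ℤ_[p]⟦X⟧ M).radical) : Finite M :=
  finite_of_le_radical_annihilator (I := .span {(p : ℤ_[p]⟦X⟧), X}) <|
    Ideal.span_le.2 <| Set.pair_subset hp hX

theorem finite_torsionBy_of_X_mem_radical_span
    (hp : (p : ℤ_[p]⟦X⟧) ∈ (Module.annihilator ℤ_[p]⟦X⟧ M).radical)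
    {f : ℤ_[p]⟦X⟧} (hf : X ∈ (Ideal.span {(p : ℤ_[p]⟦X⟧), f}).radical) :
    Finite (torsionBy ℤ_[p]⟦X⟧ M f) := by
  let I := (Module.annihilator ℤ_[p]⟦X⟧ (torsionBy ℤ_[p]⟦X⟧ M f)).radical
  have p_mem : (p : ℤ_[p]⟦X⟧) ∈ I := Ideal.radical_mono
    (LinearMap.annihilator_le_of_injective _ (torsionBy ℤ_[p]⟦X⟧ M f).injective_subtype) hp
  have f_mem : f ∈ I := Ideal.le_radical (Module.mem_annihilator.2 fun x ↦ smul_torsionBy f x)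
  have span_le : Ideal.span {(p : ℤ_[p]⟦X⟧), f} ≤ I := Ideal.span_le.2 (Set.pair_subset p_mem f_mem)
  exact finite_of_mem_radical_annihilator p_mem (Ideal.radical_le_radical_iff.2 span_le hf)

theorem finite_torsionBy_X_pow
    (hp : (p : ℤ_[p]⟦X⟧) ∈ (Module.annihilator ℤ_[p]⟦X⟧ M).radical) (b : ℕ) :
    Finite (torsionBy ℤ_[p]⟦X⟧ M (X ^ b : ℤ_[p]⟦X⟧)) :=
  finite_torsionBy_of_X_mem_radical_span hp ⟨b, Ideal.mem_span_pair.2 ⟨0, 1, by ring⟩⟩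

theorem finite_torsionBy_omegaN
    (hp : (p : ℤ_[p]⟦X⟧) ∈ (Module.annihilator ℤ_[p]⟦X⟧ M).radical) (n : ℕ) :
    Finite (torsionBy ℤ_[p]⟦X⟧ M (omegaN p n)) := by
  obtain ⟨s, hs⟩ := exists_omegaN_eq_X_pow_add (p := p) n
  exact finite_torsionBy_of_X_mem_radical_span hp
    ⟨p ^ n, Ideal.mem_span_pair.2 ⟨-s, 1, by linear_combination hs⟩⟩

/-! ### Modules killed by a power of `p` -/

theorem omegaN_smul_eq_X_pow_smul {N : Type*} [AddCommGroup N] [Module ℤ_[p]⟦X⟧ N]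
    (hp : (p : ℤ_[p]⟦X⟧) ∈ Module.annihilator ℤ_[p]⟦X⟧ N) (n : ℕ) (x : N) :
    omegaN p n • x = (X : ℤ_[p]⟦X⟧) ^ p ^ n • x := by
  obtain ⟨s, hs⟩ := exists_omegaN_eq_X_pow_add (p := p) n
  rw [hs, add_smul, mul_smul, Module.mem_annihilator.1 hp, add_zero]

theorem exists_card_quotSMulTop_omegaN_of_p_mem_annihilator
    (hp : (p : ℤ_[p]⟦X⟧) ∈ Module.annihilator ℤ_[p]⟦X⟧ M) :
    ∃ r, ∀ n, Nat.card (QuotSMulTop (omegaN p n) M) =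
      p ^ (r * p ^ n) * Nat.card (torsionBy ℤ_[p]⟦X⟧ M (omegaN p n)) := by
  obtain ⟨b, hb⟩ := exists_isSMulRegular_quotient_torsionBy_pow (M := M) (X : ℤ_[p]⟦X⟧)
  set A := torsionBy ℤ_[p]⟦X⟧ M (X ^ b : ℤ_[p]⟦X⟧)
  have : Finite A := finite_torsionBy_X_pow (Ideal.le_radical hp) b
  have p_mem : (p : ℤ_[p]⟦X⟧) ∈
      Module.annihilator ℤ_[p]⟦X⟧ (QuotSMulTop (X : ℤ_[p]⟦X⟧) (M ⧸ A)) :=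
    LinearMap.annihilator_le_of_surjective (mkQ _ ∘ₗ A.mkQ)
      ((mkQ_surjective _).comp A.mkQ_surjective) hp
  have : Finite (QuotSMulTop (X : ℤ_[p]⟦X⟧) (M ⧸ A)) :=
    finite_of_mem_radical_annihilator (Ideal.le_radical p_mem)
      (Ideal.le_radical (QuotSMulTop.mem_annihilator _ _))
  obtain ⟨r, hr⟩ := exists_card_eq_prime_pow p ℤ_[p]⟦X⟧ (QuotSMulTop (X : ℤ_[p]⟦X⟧) (M ⧸ A))
  refine ⟨r, fun n ↦ ?_⟩
  have smul_top : omegaN p n • (⊤ : Submodule ℤ_[p]⟦X⟧ M) = (X : ℤ_[p]⟦X⟧) ^ p ^ n • ⊤ := by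
    ext; simp only [mem_smul_pointwise_iff_exists, omegaN_smul_eq_X_pow_smul hp]
  have torsionBy_eq : torsionBy ℤ_[p]⟦X⟧ M (omegaN p n) =
      torsionBy ℤ_[p]⟦X⟧ M ((X : ℤ_[p]⟦X⟧) ^ p ^ n) := by
    ext; simp only [mem_torsionBy_iff, omegaN_smul_eq_X_pow_smul hp]
  rw [QuotSMulTop, smul_top, torsionBy_eq, card_quotSMulTop_of_finite_submodule A (hb.pow _),
    card_quotSMulTop_pow hb, hr, pow_mul]

theorem exists_card_quotSMulTop_omegaN_of_p_pow_mem_annihilator {a : ℕ}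
    (hp : (p : ℤ_[p]⟦X⟧) ^ a ∈ Module.annihilator ℤ_[p]⟦X⟧ M) :
    ∃ r, ∀ n, Nat.card (QuotSMulTop (omegaN p n) M) =
      p ^ (r * p ^ n) * Nat.card (torsionBy ℤ_[p]⟦X⟧ M (omegaN p n)) := by
  induction a generalizing M with
  | zero =>
    exact exists_card_quotSMulTop_omegaN_of_p_mem_annihilator
      (Ideal.mem_of_dvd _ (by simp) hp)
  | succ a ih =>
    set A : Submodule ℤ_[p]⟦X⟧ M := (p : ℤ_[p]⟦X⟧) • ⊤
    have p_pow_mem : (p : ℤ_[p]⟦X⟧) ^ a ∈ Module.annihilator ℤ_[p]⟦X⟧ A := by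
      refine Module.mem_annihilator.2 ?_
      rintro ⟨_, x, -, rfl⟩
      refine Subtype.ext ?_
      change (p : ℤ_[p]⟦X⟧) ^ a • (p : ℤ_[p]⟦X⟧) • x = 0
      rw [← mul_smul, ← pow_succ, Module.mem_annihilator.1 hp]
    have p_mem : (p : ℤ_[p]⟦X⟧) ∈ Module.annihilator ℤ_[p]⟦X⟧ (M ⧸ A) :=
      QuotSMulTop.mem_annihilator M _
    obtain ⟨r₁, hr₁⟩ := ih p_pow_mem
    obtain ⟨r₂, hr₂⟩ := exists_card_quotSMulTop_omegaN_of_p_mem_annihilator p_mem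
    refine ⟨r₁ + r₂, fun n ↦ ?_⟩
    have := finite_torsionBy_omegaN ⟨a, p_pow_mem⟩ n
    have := finite_torsionBy_omegaN (Ideal.le_radical p_mem) n
    have h := card_quotSMulTop_mul_card_torsionBy_of_exact (omegaN p n) A.injective_subtype
      (LinearMap.exact_subtype_mkQ A) A.mkQ_surjective
    rw [hr₁, hr₂] at h
    refine Nat.eq_of_mul_eq_mul_right (mul_pos Nat.card_pos Nat.card_pos) (h.trans ?_)
    ring

/-! ### Modules without `p`-torsion -/

theorem isSMulRegular_of_finite_quotSMulTop (hp : IsSMulRegular M (p : ℤ_[p]⟦X⟧)) (f : ℤ_[p]⟦X⟧)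
    [Finite (QuotSMulTop f M)] : IsSMulRegular M f := by
  obtain ⟨k, hk⟩ := exists_card_eq_prime_pow p ℤ_[p]⟦X⟧ (QuotSMulTop f M)
  refine isSMulRegular_of_mem_annihilator_quotSMulTop (hp.pow k) ?_
  refine Module.mem_annihilator.2 fun x ↦ ?_
  rw [← Nat.cast_pow, ← hk, Nat.cast_smul_eq_nsmul, card_nsmul_eq_zero']

theorem X_mem_radical_annihilator_of_card_eq
    (hp : (p : ℤ_[p]⟦X⟧) ∈ (Module.annihilator ℤ_[p]⟦X⟧ M).radical)
    [Finite (QuotSMulTop (X : ℤ_[p]⟦X⟧) M)]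
    (hcard : Nat.card (QuotSMulTop (X : ℤ_[p]⟦X⟧) M) =
      Nat.card (torsionBy ℤ_[p]⟦X⟧ M (X : ℤ_[p]⟦X⟧))) :
    X ∈ (Module.annihilator ℤ_[p]⟦X⟧ M).radical := by
  obtain ⟨b, hb⟩ := exists_isSMulRegular_quotient_torsionBy_pow (M := M) (X : ℤ_[p]⟦X⟧)
  have := finite_torsionBy_X_pow hp b
  have torsionBy_eq_top : torsionBy ℤ_[p]⟦X⟧ M (X ^ b : ℤ_[p]⟦X⟧) = ⊤ :=
    eq_top_of_card_quotSMulTop_eq_card_torsionBy (f := (X : ℤ_[p]⟦X⟧))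
      (mem_jacobson_bot_of_constantCoeff_eq_zero constantCoeff_X) hcard _ hb
  refine ⟨b, Module.mem_annihilator.2 fun x ↦ ?_⟩
  rw [← mem_torsionBy_iff, torsionBy_eq_top]
  exact mem_top

theorem X_mem_radical_annihilator_quotSMulTop_p (hp : IsSMulRegular M (p : ℤ_[p]⟦X⟧))
    [Finite (QuotSMulTop (X : ℤ_[p]⟦X⟧) M)] :
    X ∈ (Module.annihilator ℤ_[p]⟦X⟧ (QuotSMulTop (p : ℤ_[p]⟦X⟧) M)).radical :=
  have := finite_quotSMulTop_quotient (X : ℤ_[p]⟦X⟧) ((p : ℤ_[p]⟦X⟧) • (⊤ : Submodule _ M))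
  X_mem_radical_annihilator_of_card_eq (Ideal.le_radical (QuotSMulTop.mem_annihilator _ _))
    (card_quotSMulTop_quotSMulTop_eq_card_torsionBy (isSMulRegular_of_finite_quotSMulTop hp X) hp)

/- `ω_{n+2} = ω_{n+1} * (p + ω_{n+1} * k)` and `ω_{n+1} M ⊆ ω_n p M`, so by Nakayama's lemma the
second factor has the same image as `p`. -/
theorem card_quotSMulTop_omegaN_add_two {n : ℕ}
    (hn : omegaN p n ∈ Module.annihilator ℤ_[p]⟦X⟧ (QuotSMulTop (p : ℤ_[p]⟦X⟧) M))
    (hreg : IsSMulRegular M (omegaN p (n + 1))) :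
    Nat.card (QuotSMulTop (omegaN p (n + 2)) M) =
      Nat.card (QuotSMulTop (omegaN p (n + 1)) M) * Nat.card (QuotSMulTop (p : ℤ_[p]⟦X⟧) M) := by
  obtain ⟨h, hh⟩ := exists_omegaN_succ_eq (p := p) n
  obtain ⟨k, hk⟩ := exists_omegaN_succ_eq (p := p) (n + 1)
  have smul_top_eq_p_smul_top : (p + omegaN p (n + 1) * k) • (⊤ : Submodule ℤ_[p]⟦X⟧ M) =
      (p : ℤ_[p]⟦X⟧) • ⊤ := by
    rw [hh, mul_assoc]
    refine add_mul_smul_top_eq_smul_top (omegaN_mem_jacobson_bot n) ?_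
    exact Ideal.mul_mem_right _ _ <|
      add_mem (QuotSMulTop.mem_annihilator M _) (Ideal.mul_mem_right _ _ hn)
  rw [hk, card_quotSMulTop_mul _ hreg, QuotSMulTop, QuotSMulTop, smul_top_eq_p_smul_top]

theorem exists_card_quotSMulTop_omegaN_of_isSMulRegular (hp : IsSMulRegular M (p : ℤ_[p]⟦X⟧))
    [∀ n, Finite (QuotSMulTop (omegaN p n) M)] :
    ∃ l c N, ∀ n, Nat.card (QuotSMulTop (omegaN p (N + n)) M) = p ^ (l * n + c) := by
  have : Finite (QuotSMulTop (X : ℤ_[p]⟦X⟧) M) :=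
    omegaN_zero (p := p) ▸ (inferInstance : Finite (QuotSMulTop (omegaN p 0) M))
  have hX := X_mem_radical_annihilator_quotSMulTop_p hp
  have p_mem := QuotSMulTop.mem_annihilator M (p : ℤ_[p]⟦X⟧)
  have := finite_of_mem_radical_annihilator (Ideal.le_radical p_mem) hX
  obtain ⟨l, hl⟩ := exists_card_eq_prime_pow p ℤ_[p]⟦X⟧ (QuotSMulTop (p : ℤ_[p]⟦X⟧) M)
  obtain ⟨b, hb⟩ := hX
  obtain ⟨c, hc⟩ := exists_card_eq_prime_pow p ℤ_[p]⟦X⟧ (QuotSMulTop (omegaN p (b + 1)) M)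
  have omegaN_mem (n : ℕ) : omegaN p (b + n) ∈
      Module.annihilator ℤ_[p]⟦X⟧ (QuotSMulTop (p : ℤ_[p]⟦X⟧) M) := by
    obtain ⟨s, hs⟩ := exists_omegaN_eq_X_pow_add (p := p) (b + n)
    have b_le : b ≤ p ^ (b + n) :=
      (b.le_add_right n).trans (Nat.lt_pow_self (Fact.out : p.Prime).one_lt).le
    rw [hs]
    exact add_mem (Ideal.mem_of_dvd _ (pow_dvd_pow X b_le) hb) (Ideal.mul_mem_right _ _ p_mem)
  refine ⟨l, c, b + 1, fun n ↦ ?_⟩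
  induction n with
  | zero => simpa using hc
  | succ n ih =>
    have h := card_quotSMulTop_omegaN_add_two (omegaN_mem n)
      (isSMulRegular_of_finite_quotSMulTop hp _)
    rw [show b + n + 1 = b + 1 + n by lia, ih, hl] at h
    rw [show b + 1 + (n + 1) = b + n + 2 by lia, h]
    ring

theorem exists_torsionBy_omegaN_stabilizes (M : Type*) [AddCommGroup M] [Module ℤ_[p]⟦X⟧ M]
    [IsNoetherian ℤ_[p]⟦X⟧ M] : ∃ N, ∀ n, N ≤ n →
      torsionBy ℤ_[p]⟦X⟧ M (omegaN p N) = torsionBy ℤ_[p]⟦X⟧ M (omegaN p n) :=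
  monotone_stabilizes_iff_noetherian.2 ‹_› ⟨fun n ↦ torsionBy ℤ_[p]⟦X⟧ M (omegaN p n),
    fun _ _ hmn ↦ torsionBy_le_torsionBy_of_dvd _ _ (omegaN_dvd_omegaN hmn)⟩

theorem exists_card_quotSMulTop_omegaN_eq_mul_card_torsionBy
    [∀ n, Finite (QuotSMulTop (omegaN p n) M)] :
    ∃ r l c N, ∀ n, Nat.card (QuotSMulTop (omegaN p (N + n)) M) =
      p ^ (r * p ^ (N + n) + l * n + c) *
        Nat.card (torsionBy ℤ_[p]⟦X⟧ M (omegaN p (N + n))) := by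
  obtain ⟨b, hb⟩ := exists_isSMulRegular_quotient_torsionBy_pow (M := M) (p : ℤ_[p]⟦X⟧)
  set A := torsionBy ℤ_[p]⟦X⟧ M ((p : ℤ_[p]⟦X⟧) ^ b)
  have p_pow_mem : (p : ℤ_[p]⟦X⟧) ^ b ∈ Module.annihilator ℤ_[p]⟦X⟧ A :=
    Module.mem_annihilator.2 fun x ↦ smul_torsionBy _ x
  have (n : ℕ) := finite_quotSMulTop_quotient (omegaN p n) A
  obtain ⟨r, hr⟩ := exists_card_quotSMulTop_omegaN_of_p_pow_mem_annihilator p_pow_mem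
  obtain ⟨l, c, N, hN⟩ := exists_card_quotSMulTop_omegaN_of_isSMulRegular hb
  refine ⟨r, l, c, N, fun n ↦ ?_⟩
  have := finite_torsionBy_omegaN ⟨b, p_pow_mem⟩ (N + n)
  have h := card_quotSMulTop_mul_card_torsionBy_of_exact (omegaN p (N + n)) A.injective_subtype
    (LinearMap.exact_subtype_mkQ A) A.mkQ_surjective
  rw [hr, hN, card_torsionBy_eq_one (isSMulRegular_of_finite_quotSMulTop hb _)] at h
  refine Nat.eq_of_mul_eq_mul_right (mul_pos Nat.card_pos one_pos) (h.trans ?_)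
  ring

end Iwasawa

theorem statement2_general (p : ℕ) [Fact p.Prime]
    (M : Type*) [AddCommGroup M] [Module (PowerSeries ℤ_[p]) M]
    [Module.Finite (PowerSeries ℤ_[p]) M]
    (hfin : ∀ n : ℕ,
      Finite (M ⧸ (Ideal.span {omegaN p n} • (⊤ : Submodule (PowerSeries ℤ_[p]) M)))) :
    ∃ (μ lam : ℕ) (ν : ℤ) (N : ℕ), ∀ n ≥ N,
      (Nat.card
        (M ⧸ (Ideal.span {omegaN p n} • (⊤ : Submodule (PowerSeries ℤ_[p]) M))) : ℝ)
        = (p : ℝ) ^ (((μ * p ^ n + lam * n : ℕ) : ℤ) + ν) := by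
  simp only [Submodule.ideal_span_singleton_smul] at hfin ⊢
  obtain ⟨μ, l, c, N₁, h₁⟩ := Iwasawa.exists_card_quotSMulTop_omegaN_eq_mul_card_torsionBy
    (p := p) (M := M)
  obtain ⟨N₂, h₂⟩ := Iwasawa.exists_torsionBy_omegaN_stabilizes (p := p) M
  have : Finite (Submodule.torsionBy ℤ_[p]⟦X⟧ M (omegaN p N₂)) := by
    refine Nat.finite_of_card_ne_zero fun card_eq_zero ↦ ?_
    have card_quot := h₁ N₂
    rw [← h₂ _ (Nat.le_add_left _ _), card_eq_zero, mul_zero] at card_quot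
    exact Nat.card_pos.ne' card_quot
  obtain ⟨d, hd⟩ := Iwasawa.exists_card_eq_prime_pow p ℤ_[p]⟦X⟧
    (Submodule.torsionBy ℤ_[p]⟦X⟧ M (omegaN p N₂))
  refine ⟨μ, l, c + d - l * N₁, max N₁ N₂, fun n hn ↦ ?_⟩
  obtain ⟨m, rfl⟩ := Nat.exists_eq_add_of_le (le_of_max_le_left hn)
  rw [h₁, ← h₂ _ (le_of_max_le_right hn), hd, ← pow_add, Nat.cast_pow, ← zpow_natCast]
  congr 1
  push_cast
  ring

/-- For a finitely generated torsion `Λ = ℤ_p[[T]]`-module `M` with all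
quotients `M/ω_n M` finite, there are `μ, λ ∈ ℕ`, `ν ∈ ℤ` and `N` such that
`#(M/ω_n M) = p^{μ p^n + λ n + ν}` for all `n ≥ N`. -/
theorem statement2 (p : ℕ) [Fact p.Prime] (hp : Odd p)
    (M : Type*) [AddCommGroup M] [Module (PowerSeries ℤ_[p]) M]
    [Module.Finite (PowerSeries ℤ_[p]) M]
    (htors : Module.IsTorsion (PowerSeries ℤ_[p]) M)
    (hfin : ∀ n : ℕ,
      Finite (M ⧸ (Ideal.span {omegaN p n} • (⊤ : Submodule (PowerSeries ℤ_[p]) M)))) :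
    ∃ (μ lam : ℕ) (ν : ℤ) (N : ℕ), ∀ n ≥ N,
      (Nat.card
        (M ⧸ (Ideal.span {omegaN p n} • (⊤ : Submodule (PowerSeries ℤ_[p]) M))) : ℝ)
        = (p : ℝ) ^ (((μ * p ^ n + lam * n : ℕ) : ℤ) + ν) :=
  statement2_general p M hfin
end

section
/- Let φ : M → M′ be a Λ-module homomorphism between finitely generated torsion Λ-modules whose kernel and cokernel are both finite. Then there exists N ∈ ℕ such that for all n ≥ N the ℤ_p-ranks of M/ω_nM and M′/ω_nM′ are equal, and there exists a constant C such that |log_p #((M/ω_nM)[p^∞]) − log_p #((M′/ω_nM′)[p^∞])| ≤ C for all n ≥ 0. -/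
open PowerSeries

/-!
Let `φ : M → M'` have finite kernel and cokernel, and let `φ̄ : M/wM → M'/wM'` be its reduction
modulo an element `w`. The cokernel of `φ̄` is a quotient of that of `φ`. Factoring `φ` through its
image, the kernel of `M/wM → φ(M)/wφ(M)` is a quotient of `ker φ`, and the kernel of
`φ(M)/wφ(M) → M'/wM'` is a quotient of `(coker φ)[w]`. Hence the kernel and cokernel of `φ̄` are
finite, of size at most `#ker φ * #coker φ` whatever `w` is. Over an infinite domain such a map
preserves the rank and changes the order of the torsion submodule by at most that factor.
For `w = ω_n` the torsion submodules are finite, because `ω_n` is nonzero modulo `p`, so that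
`Λ/ω_n` is finitely generated over `ℤ_p` by Weierstrass preparation.
-/

universe v v'

section Cardinality

theorem enatCard_le_of_range_subset_range {α β γ : Type*} {f : α → γ} {g : β → γ}
    (hf : Function.Injective f) (h : Set.range f ⊆ Set.range g) : ENat.card α ≤ ENat.card β := by
  choose lift hlift using fun a => h (Set.mem_range_self a)
  exact ENat.card_le_card_of_injective (f := lift) fun a b hab =>
    hf ((hlift a).symm.trans ((congrArg g hab).trans (hlift b)))

variable {R A B C : Type*} [Ring R] [AddCommGroup A] [Module R A] [AddCommGroup B] [Module R B]
  [AddCommGroup C] [Module R C]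

theorem enatCard_eq_card_ker_mul_card_range (f : A →ₗ[R] B) :
    ENat.card A = ENat.card (LinearMap.ker f) * ENat.card (LinearMap.range f) := by
  rw [← ENat.card_congr f.quotKerEquivRange.toEquiv, mul_comm, ← ENat.card_prod]
  exact ENat.card_congr AddSubgroup.addGroupEquivQuotientProdAddSubgroup

theorem enatCard_le_card_ker_mul_card (f : A →ₗ[R] B) :
    ENat.card A ≤ ENat.card (LinearMap.ker f) * ENat.card B := by
  rw [enatCard_eq_card_ker_mul_card_range f]
  gcongr
  exact ENat.card_le_card_of_injective Subtype.val_injective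

theorem enatCard_submodule_le_card_ker_mul_card (f : A →ₗ[R] B) {P : Submodule R A}
    {Q : Submodule R B} (h : ∀ x ∈ P, f x ∈ Q) :
    ENat.card P ≤ ENat.card (LinearMap.ker f) * ENat.card Q := by
  have hker : ENat.card (LinearMap.ker (f.restrict h)) ≤ ENat.card (LinearMap.ker f) := by
    refine enatCard_le_of_range_subset_range (f := fun x => (x : A)) (g := fun x => (x : A))
      (Subtype.val_injective.comp Subtype.val_injective) ?_
    rintro _ ⟨x, rfl⟩
    exact ⟨⟨x, congrArg Subtype.val x.2⟩, rfl⟩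
  exact (enatCard_le_card_ker_mul_card (f.restrict h)).trans (by gcongr)

theorem enatCard_ker_comp_le (g : B →ₗ[R] C) (f : A →ₗ[R] B) :
    ENat.card (LinearMap.ker (g ∘ₗ f)) ≤
      ENat.card (LinearMap.ker f) * ENat.card (LinearMap.ker g) :=
  enatCard_submodule_le_card_ker_mul_card f fun _ hx => hx

end Cardinality

section Reduction

variable {R M M' M'' : Type*} [CommRing R] [AddCommGroup M] [Module R M] [AddCommGroup M']
  [Module R M'] [AddCommGroup M''] [Module R M'']

theorem reduceModIdeal_comp (I : Ideal R) (ψ : M' →ₗ[R] M'') (φ : M →ₗ[R] M') :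
    (ψ ∘ₗ φ).reduceModIdeal I = ψ.reduceModIdeal I ∘ₗ φ.reduceModIdeal I :=
  LinearMap.ext fun x => Quotient.inductionOn' x fun _ => rfl

theorem enatCard_coker_reduceModIdeal_le (I : Ideal R) (φ : M →ₗ[R] M') :
    ENat.card (_ ⧸ LinearMap.range (φ.reduceModIdeal I)) ≤
      ENat.card (M' ⧸ LinearMap.range φ) := by
  have hmk : Function.Surjective fun y : M' =>
      (Submodule.Quotient.mk (Submodule.Quotient.mk y) :
        _ ⧸ LinearMap.range (φ.reduceModIdeal I)) :=
    (Submodule.Quotient.mk_surjective _).comp (Submodule.Quotient.mk_surjective _)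
  choose rep hrep using hmk
  refine ENat.card_le_card_of_injective
    (f := fun x => (Submodule.Quotient.mk (rep x) : M' ⧸ LinearMap.range φ)) fun x x' h => ?_
  obtain ⟨m, hm⟩ := (Submodule.Quotient.eq _).mp h
  rw [← hrep x, ← hrep x']
  exact (Submodule.Quotient.eq _).mpr
    ⟨Submodule.Quotient.mk m, congrArg Submodule.Quotient.mk hm⟩

theorem enatCard_ker_reduceModIdeal_le_of_surjective (I : Ideal R) {φ : M →ₗ[R] M'}
    (hφ : Function.Surjective φ) :
    ENat.card (LinearMap.ker (φ.reduceModIdeal I)) ≤ ENat.card (LinearMap.ker φ) := by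
  have hmap : I • (⊤ : Submodule R M') = (I • (⊤ : Submodule R M)).map φ := by
    rw [Submodule.map_smul'', Submodule.map_top, LinearMap.range_eq_top.mpr hφ]
  refine enatCard_le_of_range_subset_range (f := Subtype.val)
    (g := fun k : LinearMap.ker φ => Submodule.Quotient.mk (k : M)) Subtype.val_injective ?_
  rintro _ ⟨⟨x, hx⟩, rfl⟩
  obtain ⟨m, rfl⟩ := Submodule.Quotient.mk_surjective _ x
  obtain ⟨m', hm', hφm⟩ : φ m ∈ (I • (⊤ : Submodule R M)).map φ :=
    hmap ▸ (Submodule.Quotient.mk_eq_zero _).mp hx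
  refine ⟨⟨m - m', by rw [LinearMap.mem_ker, map_sub, hφm, sub_self]⟩, ?_⟩
  exact (Submodule.Quotient.eq _).mpr (by simpa using hm')

theorem enatCard_ker_reduceModIdeal_le_of_injective (w : R) {φ : M →ₗ[R] M'}
    (hφ : Function.Injective φ) :
    ENat.card (LinearMap.ker (φ.reduceModIdeal (Ideal.span {w}))) ≤
      ENat.card (M' ⧸ LinearMap.range φ) := by
  have hdiv (x : LinearMap.ker (φ.reduceModIdeal (Ideal.span {w}))) :
      ∃ (m : M) (y : M'), Submodule.Quotient.mk m = x.1 ∧ φ m = w • y := by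
    obtain ⟨m, hm⟩ := Submodule.Quotient.mk_surjective _ x.1
    have hφm : φ m ∈ Ideal.span {w} • (⊤ : Submodule R M') :=
      (Submodule.Quotient.mk_eq_zero _).mp (by simpa [← hm] using x.2)
    rw [Submodule.ideal_span_singleton_smul] at hφm
    obtain ⟨y, -, hy⟩ := (Submodule.mem_smul_pointwise_iff_exists _ _ _).mp hφm
    exact ⟨m, y, hm, hy.symm⟩
  choose m y hm hy using hdiv
  refine ENat.card_le_card_of_injective
    (f := fun x => (Submodule.Quotient.mk (y x) : M' ⧸ LinearMap.range φ)) fun x x' h => ?_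
  obtain ⟨z, hz⟩ := (Submodule.Quotient.eq _).mp h
  have hsub : m x - m x' = w • z :=
    hφ (by rw [map_sub, map_smul, hy, hy, hz, smul_sub])
  refine Subtype.ext ?_
  rw [← hm x, ← hm x', Submodule.Quotient.eq, hsub]
  exact Submodule.smul_mem_smul (Ideal.mem_span_singleton_self w) Submodule.mem_top

theorem enatCard_ker_reduceModIdeal_le (w : R) (φ : M →ₗ[R] M') :
    ENat.card (LinearMap.ker (φ.reduceModIdeal (Ideal.span {w}))) ≤
      ENat.card (LinearMap.ker φ) * ENat.card (M' ⧸ LinearMap.range φ) := by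
  have hsurj := enatCard_ker_reduceModIdeal_le_of_surjective (Ideal.span {w})
    φ.surjective_rangeRestrict
  have hinj := enatCard_ker_reduceModIdeal_le_of_injective w
    (LinearMap.range φ).subtype_injective
  rw [LinearMap.ker_rangeRestrict] at hsurj
  rw [Submodule.range_subtype] at hinj
  calc ENat.card (LinearMap.ker (φ.reduceModIdeal (Ideal.span {w})))
      = ENat.card (LinearMap.ker ((LinearMap.range φ).subtype.reduceModIdeal (Ideal.span {w}) ∘ₗ
          φ.rangeRestrict.reduceModIdeal (Ideal.span {w}))) := by
        rw [← reduceModIdeal_comp, φ.subtype_comp_codRestrict]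
    _ ≤ _ := enatCard_ker_comp_le _ _
    _ ≤ _ := mul_le_mul' hsurj hinj

end Reduction

section Torsion

variable {S : Type*} {A : Type v} {B : Type v'} [CommRing S] [AddCommGroup A] [Module S A]
  [AddCommGroup B] [Module S B]

theorem map_mem_torsion (f : A →ₗ[S] B) {a : A} (ha : a ∈ Submodule.torsion S A) :
    f a ∈ Submodule.torsion S B := by
  obtain ⟨s, hs⟩ := ha
  exact ⟨s, (map_smul f (s : S) a).symm.trans ((congrArg f hs).trans (map_zero f))⟩

theorem mem_torsion_of_map_mem_torsion (f : A →ₗ[S] B)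
    (hf : Module.IsTorsion S (LinearMap.ker f)) {a : A} (ha : f a ∈ Submodule.torsion S B) :
    a ∈ Submodule.torsion S A := by
  obtain ⟨s, hs⟩ := ha
  obtain ⟨t, ht⟩ := @hf ⟨(s : S) • a, (map_smul f (s : S) a).trans hs⟩
  exact ⟨t * s, (mul_smul (t : S) (s : S) a).trans (congrArg Subtype.val ht)⟩

theorem enatCard_torsion_le_card_ker_mul_card_torsion (f : A →ₗ[S] B) :
    ENat.card (Submodule.torsion S A) ≤
      ENat.card (LinearMap.ker f) * ENat.card (Submodule.torsion S B) :=
  enatCard_submodule_le_card_ker_mul_card f fun _ => map_mem_torsion f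

theorem enatCard_torsion_le_card_coker_mul_card_torsion (f : A →ₗ[S] B)
    (hf : Module.IsTorsion S (LinearMap.ker f)) :
    ENat.card (Submodule.torsion S B) ≤
      ENat.card (B ⧸ LinearMap.range f) * ENat.card (Submodule.torsion S A) := by
  let g : Submodule.torsion S B →ₗ[S] B ⧸ LinearMap.range f :=
    (LinearMap.range f).mkQ ∘ₗ (Submodule.torsion S B).subtype
  have hg : ENat.card (LinearMap.ker g) ≤ ENat.card (Submodule.torsion S A) := by
    refine enatCard_le_of_range_subset_range (f := fun b => (b : B)) (g := fun a => f a)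
      (Subtype.val_injective.comp Subtype.val_injective) ?_
    rintro _ ⟨⟨⟨b, hb⟩, hgb⟩, rfl⟩
    obtain ⟨a, rfl⟩ := (Submodule.Quotient.mk_eq_zero _).mp hgb
    exact ⟨⟨a, mem_torsion_of_map_mem_torsion f hf hb⟩, rfl⟩
  rw [mul_comm]
  exact (enatCard_le_card_ker_mul_card g).trans (by gcongr)

theorem finite_of_moduleIsTorsion [Nontrivial S] [Ring.HasFiniteQuotients S] [Module.Finite S A]
    (hA : Module.IsTorsion S A) : Finite A := by
  obtain ⟨s, hs, hs0⟩ := Submodule.annihilator_top_inter_nonZeroDivisors hA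
  have hne : Module.annihilator S A ≠ ⊥ := by
    rw [← Submodule.annihilator_top]
    exact Submodule.ne_bot_iff _ |>.mpr ⟨s, hs, nonZeroDivisors.ne_zero hs0⟩
  have := Ring.HasFiniteQuotients.finiteQuotient hne
  let _ : Module (S ⧸ Module.annihilator S A) A :=
    (Module.isTorsionBySet_annihilator S A).module
  have : IsScalarTower S (S ⧸ Module.annihilator S A) A :=
    (Module.isTorsionBySet_annihilator S A).isScalarTower
  have := Module.Finite.of_restrictScalars_finite S (S ⧸ Module.annihilator S A) A
  exact Module.finite_of_finite (S ⧸ Module.annihilator S A)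

theorem finite_torsion_of_hasFiniteQuotients [Nontrivial S] [Ring.HasFiniteQuotients S]
    [Module.Finite S A] :
    Finite (Submodule.torsion S A) :=
  finite_of_moduleIsTorsion Submodule.torsion_isTorsion

variable [IsDomain S]

theorem lift_rank_eq_of_isTorsion_ker_of_isTorsion_coker (f : A →ₗ[S] B)
    (hker : Module.IsTorsion S (LinearMap.ker f))
    (hcoker : Module.IsTorsion S (B ⧸ LinearMap.range f)) :
    Cardinal.lift.{v'} (Module.rank S A) = Cardinal.lift.{v} (Module.rank S B) := by
  have hA : Module.rank S (A ⧸ LinearMap.ker f) = Module.rank S A := by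
    rw [← rank_quotient_add_rank_of_isDomain (LinearMap.ker f),
      Module.rank_eq_zero_iff_isTorsion.mpr hker, add_zero]
  have hB : Module.rank S (LinearMap.range f) = Module.rank S B := by
    rw [← rank_quotient_add_rank_of_isDomain (LinearMap.range f),
      Module.rank_eq_zero_iff_isTorsion.mpr hcoker, zero_add]
  rw [← hA, ← hB]
  exact f.quotKerEquivRange.lift_rank_eq

theorem moduleIsTorsion_of_finite [Infinite S] [Finite A] : Module.IsTorsion S A := by
  intro x
  obtain ⟨s, t, hst, hne⟩ := Function.not_injective_iff.mp
    (not_injective_infinite_finite fun s : S => s • x)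
  exact ⟨⟨s - t, mem_nonZeroDivisors_of_ne_zero (sub_ne_zero.mpr hne)⟩,
    (sub_smul s t x).trans (sub_eq_zero.mpr hst)⟩

end Torsion

section Logarithm

theorem abs_logb_sub_logb_le {b x y c : ℝ} (hb : 1 < b) (hx : 0 < x) (hy : 0 < y)
    (hxy : x ≤ c * y) (hyx : y ≤ c * x) : |Real.logb b x - Real.logb b y| ≤ Real.logb b c := by
  have hc : 0 < c := pos_of_mul_pos_left (hx.trans_le hxy) hy.le
  have hle {u v : ℝ} (hu : 0 < u) (hv : 0 < v) (huv : u ≤ c * v) :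
      Real.logb b u ≤ Real.logb b c + Real.logb b v :=
    (Real.logb_le_logb_of_le hb hu huv).trans_eq (Real.logb_mul hc.ne' hv.ne')
  rw [abs_sub_le_iff]
  exact ⟨by linarith [hle hx hy hxy], by linarith [hle hy hx hyx]⟩

theorem abs_logb_card_sub_logb_card_le {b : ℝ} (hb : 1 < b) {α β : Type*} [Nonempty α]
    [Nonempty β] [Finite α] {c : ℕ} (hαβ : ENat.card α ≤ c * ENat.card β)
    (hβα : ENat.card β ≤ c * ENat.card α) :
    |Real.logb b (Nat.card α) - Real.logb b (Nat.card β)| ≤ Real.logb b c := by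
  have : Finite β := ENat.card_lt_top.mp (hβα.trans_lt
    (WithTop.mul_lt_top (ENat.natCast_lt_top c) ENat.card_lt_top_of_finite))
  rw [ENat.card_eq_coe_natCard, ENat.card_eq_coe_natCard] at hαβ hβα
  exact abs_logb_sub_logb_le hb (mod_cast Nat.card_pos) (mod_cast Nat.card_pos)
    (mod_cast hαβ) (mod_cast hβα)

end Logarithm

section OmegaN

theorem finite_quotient_span_of_map_residue_ne_zero_s4 {S : Type*} [CommRing S] [IsLocalRing S]
    [IsAdicComplete (IsLocalRing.maximalIdeal S) S] {g : S⟦X⟧}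
    (hg : g.map (IsLocalRing.residue S) ≠ 0) : Module.Finite S (S⟦X⟧ ⧸ Ideal.span {g}) := by
  obtain ⟨f, h, hfactor⟩ := exists_isWeierstrassFactorization hg
  have := hfactor.isDistinguishedAt.monic.finite_quotient
  exact Module.Finite.equiv hfactor.algEquivQuotient.toLinearEquiv

theorem one_add_X_pow_ne_one {k : Type*} [CommRing k] [Nontrivial k] {m : ℕ} (hm : m ≠ 0) :
    (1 + X : k⟦X⟧) ^ m ≠ 1 := by
  intro h
  have hpoly : (1 + Polynomial.X : Polynomial k) ^ m = 1 := Polynomial.coe_injective k (by simpa)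
  have hcoeff := congrArg (fun q => q.coeff m) hpoly
  simp [Polynomial.coeff_one_add_X_pow, Polynomial.coeff_one, hm] at hcoeff

variable {p : ℕ} [Fact p.Prime]

instance hasFiniteQuotients_padicInt : Ring.HasFiniteQuotients ℤ_[p] where
  finiteQuotient {I} hI := by
    obtain ⟨n, rfl⟩ := PadicInt.ideal_eq_span_pow_p hI
    rw [← PadicInt.ker_toZModPow]
    have : NeZero (p ^ n) := ⟨pow_ne_zero n (Fact.out : p.Prime).ne_zero⟩
    exact Finite.of_injective _ (PadicInt.toZModPow (p := p) n).kerLift_injective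

theorem map_residue_omegaN_ne_zero (n : ℕ) :
    (omegaN p n).map (IsLocalRing.residue ℤ_[p]) ≠ 0 := by
  simpa [omegaN, sub_eq_zero] using
    one_add_X_pow_ne_one (pow_ne_zero n (Fact.out : p.Prime).ne_zero)

theorem finite_torsion_quotient_omegaN_smul_top {M : Type*} [AddCommGroup M]
    [Module ℤ_[p]⟦X⟧ M] [Module ℤ_[p] M] [IsScalarTower ℤ_[p] ℤ_[p]⟦X⟧ M]
    [Module.Finite ℤ_[p]⟦X⟧ M] (n : ℕ) :
    Finite (Submodule.torsion ℤ_[p]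
      (M ⧸ (Ideal.span {omegaN p n} • (⊤ : Submodule ℤ_[p]⟦X⟧ M)))) := by
  have := finite_quotient_span_of_map_residue_ne_zero_s4 (map_residue_omegaN_ne_zero (p := p) n)
  have := Module.Finite.trans (R := ℤ_[p]) (ℤ_[p]⟦X⟧ ⧸ Ideal.span {omegaN p n})
    (M ⧸ (Ideal.span {omegaN p n} • (⊤ : Submodule ℤ_[p]⟦X⟧ M)))
  exact finite_torsion_of_hasFiniteQuotients

end OmegaN

theorem statement4_general {S R : Type*} {M : Type v} {M' : Type v'} [CommRing S] [IsDomain S]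
    [Infinite S] [CommRing R] [Algebra S R]
    [AddCommGroup M] [Module R M] [Module S M] [IsScalarTower S R M]
    [AddCommGroup M'] [Module R M'] [Module S M'] [IsScalarTower S R M'] (φ : M →ₗ[R] M')
    (hker : Finite (LinearMap.ker φ)) (hcoker : Finite (M' ⧸ LinearMap.range φ)) (w : R)
    (htors : Finite (Submodule.torsion S (M ⧸ (Ideal.span {w} • (⊤ : Submodule R M)))))
    {b : ℝ} (hb : 1 < b) :
    Cardinal.lift.{v'} (Module.rank S (M ⧸ (Ideal.span {w} • (⊤ : Submodule R M)))) =
      Cardinal.lift.{v} (Module.rank S (M' ⧸ (Ideal.span {w} • (⊤ : Submodule R M')))) ∧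
    |Real.logb b (Nat.card (Submodule.torsion S
        (M ⧸ (Ideal.span {w} • (⊤ : Submodule R M))))) -
      Real.logb b (Nat.card (Submodule.torsion S
        (M' ⧸ (Ideal.span {w} • (⊤ : Submodule R M')))))| ≤
      Real.logb b (Nat.card (LinearMap.ker φ) * Nat.card (M' ⧸ LinearMap.range φ) : ℕ) := by
  let f := (φ.reduceModIdeal (Ideal.span {w})).restrictScalars S
  set c := Nat.card (LinearMap.ker φ) * Nat.card (M' ⧸ LinearMap.range φ)
  have hkerf : ENat.card (LinearMap.ker f) ≤ c := by
    have := enatCard_ker_reduceModIdeal_le w φ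
    rwa [ENat.card_eq_coe_natCard (LinearMap.ker φ),
      ENat.card_eq_coe_natCard (M' ⧸ LinearMap.range φ), ← Nat.cast_mul] at this
  have hcokerf : ENat.card (_ ⧸ LinearMap.range f) ≤ c := by
    refine (enatCard_coker_reduceModIdeal_le (Ideal.span {w}) φ).trans ?_
    rw [ENat.card_eq_coe_natCard (M' ⧸ LinearMap.range φ)]
    exact_mod_cast Nat.le_mul_of_pos_left _ Nat.card_pos
  have : Finite (LinearMap.ker f) := ENat.card_lt_top.mp (hkerf.trans_lt (ENat.natCast_lt_top c))
  have : Finite (_ ⧸ LinearMap.range f) :=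
    ENat.card_lt_top.mp (hcokerf.trans_lt (ENat.natCast_lt_top c))
  refine ⟨lift_rank_eq_of_isTorsion_ker_of_isTorsion_coker f moduleIsTorsion_of_finite
    moduleIsTorsion_of_finite, abs_logb_card_sub_logb_card_le hb ?_ ?_⟩
  · exact (enatCard_torsion_le_card_ker_mul_card_torsion f).trans (by gcongr)
  · exact (enatCard_torsion_le_card_coker_mul_card_torsion f moduleIsTorsion_of_finite).trans
      (by gcongr)

/-- If `φ : M → M'` is a `Λ`-homomorphism of finitely generated torsion
`Λ = ℤ_p[[T]]`-modules with finite kernel and cokernel (i.e. a pseudo-isomorphism), then the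
`ℤ_p`-ranks of `M/ω_n M` and `M'/ω_n M'` agree for `n` large, and the quantities
`log_p #((M/ω_n M)[p^∞])` and `log_p #((M'/ω_n M')[p^∞])` differ by a bounded amount. -/
theorem statement4 (p : ℕ) [Fact p.Prime] (hp : Odd p)
    (M M' : Type*) [AddCommGroup M] [Module (PowerSeries ℤ_[p]) M]
    [Module ℤ_[p] M] [IsScalarTower ℤ_[p] (PowerSeries ℤ_[p]) M]
    [Module.Finite (PowerSeries ℤ_[p]) M]
    [AddCommGroup M'] [Module (PowerSeries ℤ_[p]) M']
    [Module ℤ_[p] M'] [IsScalarTower ℤ_[p] (PowerSeries ℤ_[p]) M']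
    [Module.Finite (PowerSeries ℤ_[p]) M']
    (htors : Module.IsTorsion (PowerSeries ℤ_[p]) M)
    (htors' : Module.IsTorsion (PowerSeries ℤ_[p]) M')
    (φ : M →ₗ[PowerSeries ℤ_[p]] M')
    (hker : Finite (LinearMap.ker φ))
    (hcoker : Finite (M' ⧸ LinearMap.range φ)) :
    (∃ N : ℕ, ∀ n ≥ N,
      Module.finrank ℤ_[p]
        (M ⧸ (Ideal.span {omegaN p n} • (⊤ : Submodule (PowerSeries ℤ_[p]) M))) =
      Module.finrank ℤ_[p]
        (M' ⧸ (Ideal.span {omegaN p n} • (⊤ : Submodule (PowerSeries ℤ_[p]) M')))) ∧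
    (∃ C : ℝ, ∀ n : ℕ,
      |Real.logb p (Nat.card (Submodule.torsion ℤ_[p]
          (M ⧸ (Ideal.span {omegaN p n} • (⊤ : Submodule (PowerSeries ℤ_[p]) M))))) -
       Real.logb p (Nat.card (Submodule.torsion ℤ_[p]
          (M' ⧸ (Ideal.span {omegaN p n} • (⊤ : Submodule (PowerSeries ℤ_[p]) M')))))| ≤ C) := by
  have key (n : ℕ) := statement4_general φ hker hcoker (omegaN p n)
    (finite_torsion_quotient_omegaN_smul_top n) (Nat.one_lt_cast.mpr (Fact.out : p.Prime).one_lt)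
  have hrank (n : ℕ) := congrArg Cardinal.toNat (key n).1
  simp only [Cardinal.toNat_lift] at hrank
  exact ⟨⟨0, fun n _ => hrank n⟩, _, fun n => (key n).2⟩
end

section
/- Let M be a finitely generated torsion Λ-module. Then for every n ≥ 0, the ℤ_p-rank of the kernel of multiplication by ω_n on M (i.e., of M[ω_n] = {m ∈ M : ω_n·m = 0}) equals the ℤ_p-rank of the cokernel M/ω_nM. -/
open PowerSeries

/-!
The point is that `M` has finite `ℤ_p`-rank, although it need not be finitely generated over `ℤ_p`;
rank-nullity then applies to multiplication by `ω_n`, or by any other element of `Λ`.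
The module `M` is killed by some nonzero `f ∈ Λ`. Dividing `f` by a generator `a` of the ideal of
its coefficients leaves a power series `g` with a unit coefficient, and by Weierstrass preparation
`Λ/(g)` is finite over `ℤ_p`. Hence `M/gM` is finite over `ℤ_p`, while `gM` is killed by `a` and
has rank zero.
-/

section Algebra

variable {R A M : Type*} [CommRing R] [CommRing A] [Algebra R A] [AddCommGroup M] [Module A M]
  [Module R M] [IsScalarTower R A M]

theorem finite_quotient_ideal_smul_top [Module.Finite A M] (I : Ideal A)
    [Module.Finite R (A ⧸ I)] : Module.Finite R (M ⧸ I • (⊤ : Submodule A M)) := by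
  have : IsScalarTower R (A ⧸ I) (M ⧸ I • (⊤ : Submodule A M)) :=
    (Module.isTorsionBySet_quotient_ideal_smul M I).isScalarTower
  have : Module.Finite (A ⧸ I) (M ⧸ I • (⊤ : Submodule A M)) := .of_restrictScalars_finite A _ _
  exact .trans (A ⧸ I) _

theorem range_restrictScalars_lsmul (w : A) :
    LinearMap.range ((LinearMap.lsmul A M w).restrictScalars R) =
      (Ideal.span {w} • (⊤ : Submodule A M)).restrictScalars R := by
  ext x
  simp [Submodule.ideal_span_singleton_smul, Submodule.mem_smul_pointwise_iff_exists]

variable [IsDomain R]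

theorem rank_lt_aleph0_of_finite_quotient {N : Submodule R M} [Module.Finite R (M ⧸ N)] {a : R}
    (ha : a ≠ 0) (hN : ∀ x ∈ N, a • x = 0) : Module.rank R M < Cardinal.aleph0 := by
  have rank_N : Module.rank R N = 0 :=
    rank_eq_zero_iff.mpr fun x ↦ ⟨a, ha, Subtype.ext (hN x x.2)⟩
  rw [← Submodule.rank_quotient_add_rank N, rank_N, add_zero]
  exact Module.rank_lt_aleph0 R (M ⧸ N)

theorem rank_lt_aleph0_of_smul_smul_eq_zero [Module.Finite A M] {a : R} (ha : a ≠ 0) (g : A)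
    [Module.Finite R (A ⧸ Ideal.span {g})] (h : ∀ x : M, a • g • x = 0) :
    Module.rank R M < Cardinal.aleph0 := by
  let N : Submodule A M := Ideal.span {g} • ⊤
  have : Module.Finite R (M ⧸ N) := finite_quotient_ideal_smul_top _
  have : Module.Finite R (M ⧸ N.restrictScalars R) :=
    .equiv (Submodule.Quotient.restrictScalarsEquiv R N).symm
  refine rank_lt_aleph0_of_finite_quotient (N := N.restrictScalars R) ha fun x hx ↦ ?_
  rw [← range_restrictScalars_lsmul] at hx
  obtain ⟨y, rfl⟩ := hx
  exact h y

theorem rank_ker_eq_rank_quotient_range (hM : Module.rank R M < Cardinal.aleph0)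
    (φ : M →ₗ[R] M) :
    Module.rank R (LinearMap.ker φ) = Module.rank R (M ⧸ LinearMap.range φ) := by
  have rank_range : Module.rank R (LinearMap.range φ) < Cardinal.aleph0 :=
    (Submodule.rank_le _).trans_lt hM
  refine Cardinal.eq_of_add_eq_add_left ?_ rank_range
  rw [LinearMap.rank_range_add_rank_ker, add_comm, Submodule.rank_quotient_add_rank]

theorem finrank_torsionBy_eq_finrank_quotient (hM : Module.rank R M < Cardinal.aleph0) (w : A) :
    Module.finrank R (Submodule.torsionBy A M w) =
      Module.finrank R (M ⧸ Ideal.span {w} • (⊤ : Submodule A M)) := by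
  have rank_eq := rank_ker_eq_rank_quotient_range hM ((LinearMap.lsmul A M w).restrictScalars R)
  rw [range_restrictScalars_lsmul,
    (Submodule.Quotient.restrictScalarsEquiv R _).rank_eq] at rank_eq
  exact congrArg Cardinal.toNat rank_eq

end Algebra

section PowerSeries

variable {R : Type*} [CommRing R]

theorem exists_eq_C_mul_and_span_coeff_eq_top [IsDomain R] [IsPrincipalIdealRing R] {f : R⟦X⟧}
    (hf : f ≠ 0) :
    ∃ (a : R) (g : R⟦X⟧),
      a ≠ 0 ∧ f = C a * g ∧ Ideal.span (Set.range fun i ↦ coeff i g) = ⊤ := by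
  obtain ⟨a, span_eq⟩ :=
    IsPrincipalIdealRing.principal (Ideal.span (Set.range fun i ↦ coeff i f))
  have dvd_coeff (i : ℕ) : a ∣ coeff i f := by
    rw [← Ideal.mem_span_singleton, Ideal.span, ← span_eq]
    exact Ideal.subset_span ⟨i, rfl⟩
  choose c coeff_eq using dvd_coeff
  have f_eq : f = C a * mk c := by
    ext i
    rw [coeff_C_mul, coeff_mk, coeff_eq]
  have ha : a ≠ 0 := by
    rintro rfl
    exact hf (by rw [f_eq, map_zero, zero_mul])
  refine ⟨a, mk c, ha, f_eq, ?_⟩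
  have mul_span_eq :
      Ideal.span {a} * Ideal.span (Set.range c) = Ideal.span (Set.range fun i ↦ coeff i f) := by
    rw [Ideal.span_mul_span', Set.singleton_mul, ← Set.range_comp]
    simp only [Function.comp_def, coeff_eq]
  simp only [coeff_mk]
  refine (Ideal.span_singleton_mul_right_inj ha).mp ?_
  rw [mul_span_eq, span_eq, Ideal.mul_top, Ideal.span]

variable [IsLocalRing R]

theorem map_residue_ne_zero_of_span_coeff_eq_top {g : R⟦X⟧}
    (hg : Ideal.span (Set.range fun i ↦ coeff i g) = ⊤) :
    g.map (IsLocalRing.residue R) ≠ 0 := by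
  intro map_eq_zero
  refine (IsLocalRing.maximalIdeal.isMaximal R).ne_top (top_unique (hg ▸ Ideal.span_le.mpr ?_))
  rintro _ ⟨i, rfl⟩
  rw [SetLike.mem_coe, ← IsLocalRing.residue_eq_zero_iff, ← coeff_map, map_eq_zero, map_zero]

variable [IsAdicComplete (IsLocalRing.maximalIdeal R) R]

theorem finite_quotient_span_singleton_of_map_residue_ne_zero {g : R⟦X⟧}
    (hg : g.map (IsLocalRing.residue R) ≠ 0) : Module.Finite R (R⟦X⟧ ⧸ Ideal.span {g}) := by
  obtain ⟨f, h, factorization⟩ := exists_isWeierstrassFactorization hg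
  have : Module.Finite R (Polynomial R ⧸ Ideal.span {f}) :=
    factorization.isDistinguishedAt.monic.finite_adjoinRoot
  exact .equiv factorization.algEquivQuotient.toLinearEquiv

variable [IsDomain R] [IsPrincipalIdealRing R] {M : Type*} [AddCommGroup M] [Module R⟦X⟧ M]
  [Module R M] [IsScalarTower R R⟦X⟧ M] [Module.Finite R⟦X⟧ M]

theorem rank_lt_aleph0_of_isTorsion (htors : Module.IsTorsion R⟦X⟧ M) :
    Module.rank R M < Cardinal.aleph0 := by
  obtain ⟨f, f_mem, f_nonZeroDivisor⟩ := Submodule.annihilator_top_inter_nonZeroDivisors htors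
  obtain ⟨a, g, ha, rfl, hg⟩ :=
    exists_eq_C_mul_and_span_coeff_eq_top (nonZeroDivisors.ne_zero f_nonZeroDivisor)
  have : Module.Finite R (R⟦X⟧ ⧸ Ideal.span {g}) :=
    finite_quotient_span_singleton_of_map_residue_ne_zero
      (map_residue_ne_zero_of_span_coeff_eq_top hg)
  refine rank_lt_aleph0_of_smul_smul_eq_zero ha g fun x ↦ ?_
  rw [← smul_assoc, smul_eq_C_mul]
  exact Submodule.mem_annihilator.mp f_mem x trivial

theorem statement5_general (htors : Module.IsTorsion R⟦X⟧ M) (w : R⟦X⟧) :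
    Module.finrank R (Submodule.torsionBy R⟦X⟧ M w) =
      Module.finrank R (M ⧸ Ideal.span {w} • (⊤ : Submodule R⟦X⟧ M)) :=
  finrank_torsionBy_eq_finrank_quotient (rank_lt_aleph0_of_isTorsion htors) w

end PowerSeries

/-- For a finitely generated torsion `Λ = ℤ_p[[T]]`-module `M` and every
`n ≥ 0`, the `ℤ_p`-rank of `M[ω_n] = ker(ω_n : M → M)` equals the `ℤ_p`-rank of the
cokernel `M/ω_n M`. -/
theorem statement5 (p : ℕ) [Fact p.Prime] (hp : Odd p)
    (M : Type*) [AddCommGroup M] [Module (PowerSeries ℤ_[p]) M]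
    [Module ℤ_[p] M] [IsScalarTower ℤ_[p] (PowerSeries ℤ_[p]) M]
    [Module.Finite (PowerSeries ℤ_[p]) M]
    (htors : Module.IsTorsion (PowerSeries ℤ_[p]) M) :
    ∀ n : ℕ,
      Module.finrank ℤ_[p] (Submodule.torsionBy (PowerSeries ℤ_[p]) M (omegaN p n)) =
      Module.finrank ℤ_[p]
        (M ⧸ (Ideal.span {omegaN p n} • (⊤ : Submodule (PowerSeries ℤ_[p]) M))) :=
  fun n ↦ statement5_general htors (omegaN p n)
end

section
/- Let R be a commutative ring, x ∈ R, and C a cochain complex of R-modules indexed by ℤ. Let C_x denote the mapping cone of the chain map x·id_C : C → C given by multiplication by x. Then for each i ∈ ℤ there is a short exact sequence of R-modules 0 → H^i(C)/x·H^i(C) → H^i(C_x) → H^{i+1}(C)[x] → 0, where H^{i+1}(C)[x] = {m ∈ H^{i+1}(C) : x·m = 0} is the x-torsion submodule. -/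
open CategoryTheory

set_option synthInstance.maxHeartbeats 1000000
set_option maxHeartbeats 1000000

/-!
The triangle `K ⟶ L ⟶ cone φ ⟶ K⟦1⟧` is distinguished in the derived category, so it has a long
exact homology sequence. Around `Hⁱ(cone φ)` this sequence breaks up into
`0 → coker Hⁱ(φ) → Hⁱ(cone φ) → ker Hⁱ⁺¹(φ) → 0`. For `φ = x • 𝟙 C`, both `Hⁱ(φ)` and `Hⁱ⁺¹(φ)`
are multiplication by `x`.
-/

universe v u

theorem homologyMap_smul {R A ι : Type*} [Semiring R] [Category* A] [Preadditive A] [Linear R A]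
    {c : ComplexShape ι} {K L : HomologicalComplex A c} (a : R) (φ : K ⟶ L) (i : ι)
    [K.HasHomology i] [L.HasHomology i] :
    HomologicalComplex.homologyMap (a • φ) i = a • HomologicalComplex.homologyMap φ i :=
  ShortComplex.homologyMap_smul
    ((HomologicalComplex.shortComplexFunctor A c i).map φ) a

theorem homologyMap_smul_id_hom {R : Type u} {ι : Type*} [CommRing R] {c : ComplexShape ι}
    (K : HomologicalComplex (ModuleCat.{v} R) c) (x : R) (i : ι) :
    (HomologicalComplex.homologyMap (x • 𝟙 K) i).hom =
      x • (LinearMap.id : K.homology i →ₗ[R] K.homology i) := by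
  rw [homologyMap_smul, HomologicalComplex.homologyMap_id, ModuleCat.hom_smul, ModuleCat.hom_id]

theorem exists_shortExact_quotient_range_ker_of_exact {R M₁ M₂ M₃ M₄ M₅ : Type*} [Ring R]
    [AddCommGroup M₁] [AddCommGroup M₂] [AddCommGroup M₃] [AddCommGroup M₄] [AddCommGroup M₅]
    [Module R M₁] [Module R M₂] [Module R M₃] [Module R M₄] [Module R M₅]
    {a : M₁ →ₗ[R] M₂} {b : M₂ →ₗ[R] M₃} {c : M₃ →ₗ[R] M₄} {d : M₄ →ₗ[R] M₅}
    (hab : Function.Exact a b) (hbc : Function.Exact b c) (hcd : Function.Exact c d) :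
    ∃ (f : (M₂ ⧸ LinearMap.range a) →ₗ[R] M₃) (g : M₃ →ₗ[R] LinearMap.ker d),
      Function.Injective f ∧ Function.Surjective g ∧ LinearMap.range f = LinearMap.ker g := by
  refine ⟨(LinearMap.range a).liftQ b hab.linearMap_ker_eq.ge,
    c.codRestrict (LinearMap.ker d) fun m ↦ LinearMap.mem_ker.mpr (hcd.apply_apply_eq_zero m),
    LinearMap.injective_range_liftQ_of_exact hab, ?_, ?_⟩
  · rintro ⟨m, hm⟩
    obtain ⟨n, rfl⟩ := (hcd m).mp hm
    exact ⟨n, rfl⟩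
  · rw [Submodule.range_liftQ, LinearMap.ker_codRestrict, hbc.linearMap_ker_eq]

open CochainComplex in
theorem statement10_general {R : Type u} [Ring R] {K L : CochainComplex (ModuleCat.{v} R) ℤ}
    (φ : K ⟶ L) (i : ℤ) :
    ∃ (f : (L.homology i ⧸ LinearMap.range (HomologicalComplex.homologyMap φ i).hom) →ₗ[R]
          (mappingCone φ).homology i)
      (g : (mappingCone φ).homology i →ₗ[R]
          LinearMap.ker (HomologicalComplex.homologyMap φ (i + 1)).hom),
      Function.Injective f ∧ Function.Surjective g ∧ LinearMap.range f = LinearMap.ker g := by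
  let := HasDerivedCategory.standard (ModuleCat.{v} R)
  have hT := DerivedCategory.mappingCone_triangle_distinguished φ
  have exact_at_target := homologyMap_exact₂_of_distTriang _ hT i
  have exact_at_cone := homologyMap_exact₃_of_distTriang _ hT i (i + 1)
  have exact_at_source := homologyMap_exact₁_of_distTriang _ hT i (i + 1)
  rw [ShortComplex.ShortExact.moduleCat_exact_iff_function_exact]
    at exact_at_target exact_at_cone exact_at_source
  exact exists_shortExact_quotient_range_ker_of_exact exact_at_target exact_at_cone exact_at_source

/-- Let `R` be a commutative ring, `x ∈ R`, and `C` a cochain complex of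
`R`-modules indexed by `ℤ`.  Let `C_x` be the mapping cone of `x · id_C : C → C`.  Then for
each `i ∈ ℤ` there is a short exact sequence of `R`-modules
`0 → H^i(C)/x H^i(C) → H^i(C_x) → H^{i+1}(C)[x] → 0`. -/
theorem statement10 (R : Type) [CommRing R] (C : CochainComplex (ModuleCat R) ℤ) (x : R)
    (i : ℤ) :
    ∃ (f : ((C.homology i) ⧸ LinearMap.range
            (x • (LinearMap.id : C.homology i →ₗ[R] C.homology i))) →ₗ[R]
          (CochainComplex.mappingCone (x • (𝟙 C))).homology i)
      (g : (CochainComplex.mappingCone (x • (𝟙 C))).homology i →ₗ[R]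
          (LinearMap.ker (x • (LinearMap.id : C.homology (i+1) →ₗ[R] C.homology (i+1))))),
      Function.Injective f ∧ Function.Surjective g ∧ LinearMap.range f = LinearMap.ker g := by
  rw [← homologyMap_smul_id_hom, ← homologyMap_smul_id_hom]
  exact statement10_general (x • 𝟙 C) i
end
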